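/- arXiv:1907.01634 — 2 statements merged into one kernel-verified Lean document; each statement's English description precedes it below -/
import Mathlib

section
/- Let 0 < q < 1 and set V := ψ^2(q)/(q ψ^2(q^5)). Then q f^6(-q) f^6(-q^10) / (f^6(-q^2) f^6(-q^5)) = (V-5)/(V(V-1)). -/
open Real

/-- Ramanujan's theta function `φ(q) = ∑_{n=-∞}^∞ q^(n^2)`. -/
noncomputable def phi (q : ℝ) : ℝ := ∑' n : ℤ, q ^ (n ^ 2)

/-- Ramanujan's theta function `ψ(q) = ∑_{n=0}^∞ q^(n(n+1)/2)`. -/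
noncomputable def psi (q : ℝ) : ℝ := ∑' n : ℕ, q ^ (n * (n + 1) / 2)

/-- `fneg q` is Ramanujan's `f(-q) = ∑_{n=-∞}^∞ (-1)^n q^(n(3n-1)/2)`. -/
noncomputable def fneg (q : ℝ) : ℝ := ∑' n : ℤ, (-1 : ℝ) ^ n * q ^ (n * (3 * n - 1) / 2)

/-!
By the Jacobi triple product identity the theta series `θ(z) = ∑ q ^ (n (n + 1) / 2) z ^ n` over the
integers is an infinite product; so are `ψ(q) = θ(1) / 2` and `f(-q)`. Everything comes from one
dissection of `θ(ζ) θ(ζ⁻²)` for a fifth root of unity `ζ`. Expand it as a double sum over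
`(u, v) ∈ ℤ²`; the power of `ζ` depends only on `u - 2 v` modulo `5`, that is, on the coset of
`(u, v)` modulo the ideal `(2 + i)` of `ℤ[i]`. A quarter turn about the centre `(-1/2, -1/2)`
preserves the power of `q`, fixes one of the five cosets and permutes the other four cyclically.
With `C₀` the sum over any of those four and `C₃` the sum over the fixed coset,
`θ(ζ) θ(ζ⁻²) = (1 + ζ + ζ² + ζ⁴) C₀ + ζ³ C₃`, and `C₃ = 4 q ψ²(q⁵)`.

For `ζ = 1` this gives `C₀ = ψ²(q) - q ψ²(q⁵)`, where `C₀` is itself a product of two theta series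
with base `q⁵`. For `ζ` primitive it gives a product formula for
`C₀ - C₃ = ψ²(q) - 5 q ψ²(q⁵)`. These two quantities are the numerators of `V - 1` and `V - 5`.
-/

namespace QSeries

open Filter Finset Topology

section Pochhammer

/-- The finite `q`-Pochhammer symbol `(a; q)_n`. -/
def qPochhammer {R : Type*} [CommRing R] (a q : R) (n : ℕ) : R :=
  ∏ k ∈ range n, (1 - a * q ^ k)

/-- The infinite `q`-Pochhammer symbol `(a; q)_∞`. It has its intended meaning for `‖q‖ < 1`, where
the product converges. -/
noncomputable def qPochhammerInf {R : Type*} [CommRing R] [TopologicalSpace R] (a q : R) : R :=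
  ∏' k : ℕ, (1 - a * q ^ k)

lemma qPochhammer_zero {R : Type*} [CommRing R] (a q : R) : qPochhammer a q 0 = 1 :=
  prod_range_zero _

lemma qPochhammer_succ {R : Type*} [CommRing R] (a q : R) (n : ℕ) :
    qPochhammer a q (n + 1) = qPochhammer a q n * (1 - a * q ^ n) :=
  prod_range_succ _ n

lemma norm_pow_lt_one {R : Type*} [NormedDivisionRing R] {q : R} (hq : ‖q‖ < 1) {m : ℕ}
    (hm : m ≠ 0) : ‖q ^ m‖ < 1 := by
  rw [norm_pow]
  exact pow_lt_one₀ (norm_nonneg q) hq hm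

variable {𝕜 : Type*} [NormedField 𝕜] {a q : 𝕜}

lemma one_sub_mul_pow_ne_zero (hq : ‖q‖ ≤ 1) (ha : ‖a‖ < 1) (k : ℕ) : 1 - a * q ^ k ≠ 0 := by
  intro h
  have hlt : ‖a * q ^ k‖ < 1 := by
    rw [norm_mul, norm_pow]
    exact (mul_le_of_le_one_right (norm_nonneg a) (pow_le_one₀ (norm_nonneg q) hq)).trans_lt ha
  rw [← sub_eq_zero.1 h, norm_one] at hlt
  exact hlt.false

lemma summable_norm_mul_pow (hq : ‖q‖ < 1) (a : 𝕜) : Summable fun k : ℕ ↦ ‖a * q ^ k‖ := by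
  simpa only [norm_mul, norm_pow] using
    (summable_geometric_of_lt_one (norm_nonneg q) hq).mul_left ‖a‖

variable [CompleteSpace 𝕜]

lemma multipliable_one_sub_mul_pow (hq : ‖q‖ < 1) (a : 𝕜) :
    Multipliable fun k : ℕ ↦ 1 - a * q ^ k := by
  simpa only [sub_eq_add_neg] using
    multipliable_one_add_of_summable (by simpa only [norm_neg] using summable_norm_mul_pow hq a)

lemma tendsto_qPochhammer (hq : ‖q‖ < 1) (a : 𝕜) :
    Tendsto (qPochhammer a q) atTop (𝓝 (qPochhammerInf a q)) :=
  (multipliable_one_sub_mul_pow hq a).hasProd.tendsto_prod_nat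

lemma qPochhammerInf_ne_zero (hq : ‖q‖ < 1) (ha : ‖a‖ < 1) : qPochhammerInf a q ≠ 0 := by
  have hne (k : ℕ) : 1 + -(a * q ^ k) ≠ 0 := by
    simpa only [sub_eq_add_neg] using one_sub_mul_pow_ne_zero hq.le ha k
  simpa only [qPochhammerInf, sub_eq_add_neg] using
    tprod_one_add_ne_zero_of_summable hne
      (by simpa only [norm_neg] using summable_norm_mul_pow hq a)

lemma qPochhammerInf_eq_one_sub_mul (hq : ‖q‖ < 1) (a : 𝕜) :
    qPochhammerInf a q = (1 - a) * qPochhammerInf (a * q) q := by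
  have hshift (k : ℕ) : 1 - a * q ^ (k + 1) = 1 - a * q * q ^ k := by rw [pow_succ', mul_assoc]
  rw [qPochhammerInf, tprod_eq_zero_mul', pow_zero, mul_one]
  · simp only [hshift, qPochhammerInf]
  · simpa only [hshift] using multipliable_one_sub_mul_pow hq (a * q)

lemma prod_qPochhammerInf_mul_pow (hq : ‖q‖ < 1) (a : 𝕜) {m : ℕ} (hm : m ≠ 0) :
    ∏ j ∈ range m, qPochhammerInf (a * q ^ j) (q ^ m) = qPochhammerInf a q := by
  have : NeZero m := ⟨hm⟩
  let e := (Nat.divModEquiv m).trans (Equiv.prodComm _ _)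
  have he (j : Fin m) (k : ℕ) :
      1 - a * q ^ e.symm (j, k) = 1 - a * q ^ (j : ℕ) * (q ^ m) ^ k := by
    rw [mul_assoc, ← pow_mul, ← pow_add, add_comm, mul_comm m]
    rfl
  have hmul := (e.symm.multipliable_iff (f := fun n : ℕ ↦ 1 - a * q ^ n)).2
    (multipliable_one_sub_mul_pow hq a)
  simp only [Function.comp_def] at hmul
  rw [qPochhammerInf, ← e.symm.tprod_eq, hmul.tprod_prod' fun j ↦ ?_, tprod_fintype, prod_range]
  · simp only [he, qPochhammerInf]
  · simpa only [he] using
      multipliable_one_sub_mul_pow (norm_pow_lt_one hq hm) (a * q ^ (j : ℕ))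

lemma prod_one_sub_pow_mul_of_isPrimitiveRoot {R : Type*} [CommRing R] [IsDomain R] {ζ : R} {m : ℕ}
    (hζ : IsPrimitiveRoot ζ m) (hm : 0 < m) (a : R) :
    ∏ i ∈ range m, (1 - ζ ^ i * a) = 1 - a ^ m := by
  simpa [Polynomial.eval_prod] using
    (congrArg (Polynomial.eval 1) (X_pow_sub_C_eq_prod hζ hm (rfl : a ^ m = a ^ m))).symm

lemma prod_qPochhammerInf_pow_mul_of_isPrimitiveRoot (hq : ‖q‖ < 1) {ζ : 𝕜} {m : ℕ}
    (hζ : IsPrimitiveRoot ζ m) (hm : 0 < m) (a : 𝕜) :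
    ∏ i ∈ range m, qPochhammerInf (ζ ^ i * a) q = qPochhammerInf (a ^ m) (q ^ m) := by
  simp only [qPochhammerInf]
  rw [← Multipliable.tprod_finsetProd fun i _ ↦ multipliable_one_sub_mul_pow hq (ζ ^ i * a)]
  refine tprod_congr fun k ↦ ?_
  simp only [mul_assoc]
  rw [prod_one_sub_pow_mul_of_isPrimitiveRoot hζ hm, mul_pow, ← pow_mul, ← pow_mul, mul_comm k]

end Pochhammer

section Triangular

/-- The triangular number `n (n + 1) / 2` of an integer `n`. -/
def triangular (n : ℤ) : ℤ := n * (n + 1) / 2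

lemma two_mul_triangular (n : ℤ) : 2 * triangular n = n * (n + 1) :=
  Int.two_mul_ediv_two_of_even (Int.even_mul_succ_self n)

lemma triangular_add_one (n : ℤ) : triangular (n + 1) = triangular n + (n + 1) := by
  linarith [two_mul_triangular n, two_mul_triangular (n + 1)]

lemma triangular_neg (n : ℤ) : triangular (-n) = triangular n - n := by
  linarith [two_mul_triangular n, two_mul_triangular (-n)]

end Triangular

section Theta

variable {𝕜 : Type*}

/-- The general term `q ^ (n (n + 1) / 2) z ^ n` of the theta series. -/
def thetaTerm [DivisionRing 𝕜] (q z : 𝕜) (n : ℤ) : 𝕜 := q ^ triangular n * z ^ n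

/-- The theta series `∑ q ^ (n (n + 1) / 2) z ^ n` over all integers `n`. In Ramanujan's notation it
is `f(z q, 1 / z)`. -/
noncomputable def theta [DivisionRing 𝕜] [TopologicalSpace 𝕜] (q z : 𝕜) : 𝕜 :=
  ∑' n : ℤ, thetaTerm q z n

lemma thetaTerm_add_one [Field 𝕜] {q z : 𝕜} (hq0 : q ≠ 0) (hz : z ≠ 0) (n : ℤ) :
    thetaTerm q z (n + 1) = z * q ^ (n + 1) * thetaTerm q z n := by
  rw [thetaTerm, thetaTerm, triangular_add_one, zpow_add₀ hq0, zpow_add_one₀ hz]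
  ring

lemma thetaTerm_neg [Field 𝕜] {q : 𝕜} (hq0 : q ≠ 0) (z : 𝕜) (n : ℤ) :
    thetaTerm q z (-n) = thetaTerm q (q * z)⁻¹ n := by
  rw [thetaTerm, thetaTerm, triangular_neg, zpow_sub₀ hq0, inv_zpow, mul_zpow, zpow_neg, mul_inv]
  ring

lemma theta_inv [Field 𝕜] [TopologicalSpace 𝕜] {q : 𝕜} (hq0 : q ≠ 0) (z : 𝕜) :
    theta q (q * z)⁻¹ = theta q z := by
  rw [theta, theta, ← (Equiv.neg ℤ).tsum_eq (thetaTerm q z)]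
  exact tsum_congr fun n ↦ (thetaTerm_neg hq0 z n).symm

lemma summable_norm_thetaTerm_natCast [NormedField 𝕜] {q z : 𝕜} (hq : ‖q‖ < 1) (hq0 : q ≠ 0)
    (hz : z ≠ 0) : Summable fun n : ℕ ↦ ‖thetaTerm q z n‖ := by
  have hne (n : ℤ) : thetaTerm q z n ≠ 0 := mul_ne_zero (zpow_ne_zero _ hq0) (zpow_ne_zero _ hz)
  have hratio : Tendsto (fun n : ℕ ↦ ‖z‖ * ‖q‖ ^ (n + 1)) atTop (𝓝 0) := by
    simpa only [Function.comp_def, mul_zero] using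
      ((tendsto_pow_atTop_nhds_zero_of_lt_one (norm_nonneg q) hq).comp
        (tendsto_add_atTop_nat 1)).const_mul ‖z‖
  refine summable_of_ratio_test_tendsto_lt_one zero_lt_one
    (.of_forall fun n ↦ norm_ne_zero_iff.2 (hne n)) (hratio.congr fun n ↦ ?_)
  rw [Nat.cast_succ, thetaTerm_add_one hq0 hz, norm_norm, norm_norm, norm_mul,
    mul_div_cancel_right₀ _ (norm_ne_zero_iff.2 (hne n)), norm_mul, ← Nat.cast_succ, zpow_natCast,
    norm_pow]

lemma summable_norm_thetaTerm [NormedField 𝕜] {q z : 𝕜} (hq : ‖q‖ < 1) (hq0 : q ≠ 0)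
    (hz : z ≠ 0) : Summable fun n : ℤ ↦ ‖thetaTerm q z n‖ := by
  refine .of_nat_of_neg (summable_norm_thetaTerm_natCast hq hq0 hz) ?_
  simpa only [thetaTerm_neg hq0] using
    summable_norm_thetaTerm_natCast hq hq0 (inv_ne_zero (mul_ne_zero hq0 hz))

end Theta

section TripleProduct

section Finite

variable {𝕜 : Type*} [Field 𝕜] {q z : 𝕜}

/-- The reciprocal of the `q`-factorial `(q; q)_m`, extended by zero to `m < 0`. -/
noncomputable def qFactorialInv (q : 𝕜) (m : ℤ) : 𝕜 :=
  if m < 0 then 0 else (qPochhammer q q m.toNat)⁻¹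

lemma qFactorialInv_natCast (q : 𝕜) (n : ℕ) : qFactorialInv q n = (qPochhammer q q n)⁻¹ := by
  simp [qFactorialInv]

lemma qFactorialInv_of_neg (q : 𝕜) {m : ℤ} (hm : m < 0) : qFactorialInv q m = 0 := if_pos hm

lemma one_sub_zpow_natCast_add_one_ne_zero (hq : ¬IsOfFinOrder q) (n : ℕ) :
    1 - q ^ ((n : ℤ) + 1) ≠ 0 := fun h ↦
  hq <| isOfFinOrder_iff_pow_eq_one.2 ⟨n + 1, n.succ_pos, by
    rw [← zpow_natCast, Nat.cast_succ, sub_eq_zero.1 h]⟩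

lemma one_sub_zpow_mul_qFactorialInv (hq : ¬IsOfFinOrder q) (m : ℤ) :
    (1 - q ^ m) * qFactorialInv q m = qFactorialInv q (m - 1) := by
  rcases lt_trichotomy m 0 with hm | rfl | hm
  · rw [qFactorialInv_of_neg q hm, qFactorialInv_of_neg q (by omega), mul_zero]
  · rw [zpow_zero, sub_self, zero_mul, qFactorialInv_of_neg q (by omega)]
  · obtain ⟨n, rfl⟩ : ∃ n : ℕ, m = n + 1 := ⟨(m - 1).toNat, by omega⟩
    have hne := one_sub_zpow_natCast_add_one_ne_zero hq n
    rw [add_sub_cancel_right, qFactorialInv_natCast, ← Nat.cast_succ, qFactorialInv_natCast,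
      qPochhammer_succ, ← pow_succ', ← zpow_natCast q, mul_inv_rev]
    exact mul_inv_cancel_left₀ (by exact_mod_cast hne) _

/-- The general term of the finite triple product series. Its limit for `A` and `B` tending to
infinity is `thetaTerm q z n / (q; q)_∞ ^ 2`. -/
noncomputable def tripleProductTerm (q z : 𝕜) (A B n : ℤ) : 𝕜 :=
  qFactorialInv q (A - n) * qFactorialInv q (B + n) * thetaTerm q z n

lemma one_sub_zpow_mul_tripleProductTerm_add_one_left (hq : ¬IsOfFinOrder q) (hq0 : q ≠ 0)
    (hz : z ≠ 0) (A B n : ℤ) :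
    (1 - q ^ (A + B + 1)) * tripleProductTerm q z (A + 1) B n =
      tripleProductTerm q z A B n + z * q ^ (A + 1) * tripleProductTerm q z A B (n - 1) := by
  have hA := one_sub_zpow_mul_qFactorialInv hq (A + 1 - n)
  have hB := one_sub_zpow_mul_qFactorialInv hq (B + n)
  have hθ := thetaTerm_add_one hq0 hz (n - 1)
  have hqA : q ^ (A + 1) = q ^ (A + 1 - n) * q ^ n := by rw [← zpow_add₀ hq0, sub_add_cancel]
  have hqAB : q ^ (A + B + 1) = q ^ (A + 1 - n) * q ^ (B + n) := by
    rw [← zpow_add₀ hq0]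
    ring_nf
  rw [sub_add_cancel] at hθ
  rw [tripleProductTerm, tripleProductTerm, tripleProductTerm, hqAB, hqA, hθ,
    show A - n = A + 1 - n - 1 by ring, ← hA, show A - (n - 1) = A + 1 - n by ring,
    show B + (n - 1) = B + n - 1 by ring, ← hB]
  ring

lemma one_sub_zpow_mul_tripleProductTerm_add_one_right (hq : ¬IsOfFinOrder q) (hq0 : q ≠ 0)
    (hz : z ≠ 0) (A B n : ℤ) :
    (1 - q ^ (A + B + 1)) * tripleProductTerm q z A (B + 1) n =
      tripleProductTerm q z A B n + z⁻¹ * q ^ B * tripleProductTerm q z A B (n + 1) := by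
  have hA := one_sub_zpow_mul_qFactorialInv hq (A - n)
  have hB := one_sub_zpow_mul_qFactorialInv hq (B + 1 + n)
  have hqB : q ^ (B + 1 + n) = q ^ B * q ^ (n + 1) := by
    rw [← zpow_add₀ hq0]
    ring_nf
  have hqAB : q ^ (A + B + 1) = q ^ (A - n) * q ^ (B + 1 + n) := by
    rw [← zpow_add₀ hq0]
    ring_nf
  rw [tripleProductTerm, tripleProductTerm, tripleProductTerm, hqAB, thetaTerm_add_one hq0 hz,
    show A - (n + 1) = A - n - 1 by ring, ← hA, show B + n = B + 1 + n - 1 by ring, ← hB,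
    show B + (n + 1) = B + 1 + n by ring, hqB]
  field_simp
  ring

variable [TopologicalSpace 𝕜]

lemma hasSum_tripleProductTerm_zero_zero (q z : 𝕜) :
    HasSum (tripleProductTerm q z 0 0) 1 := by
  convert hasSum_single (0 : ℤ) fun n hn ↦ ?_ using 1
  · simp [tripleProductTerm, qFactorialInv, thetaTerm, triangular, qPochhammer_zero]
  · rcases lt_or_gt_of_ne hn with h | h <;> simp [tripleProductTerm, qFactorialInv, h]

variable [IsTopologicalRing 𝕜]

lemma hasSum_tripleProductTerm_add_one_left (hq : ¬IsOfFinOrder q) (hq0 : q ≠ 0) (hz : z ≠ 0)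
    {A B : ℤ} (hAB : 1 - q ^ (A + B + 1) ≠ 0) {S : 𝕜} (h : HasSum (tripleProductTerm q z A B) S) :
    HasSum (tripleProductTerm q z (A + 1) B)
      ((1 - q ^ (A + B + 1))⁻¹ * ((1 + z * q ^ (A + 1)) * S)) := by
  have hsum : HasSum (fun n ↦ (1 - q ^ (A + B + 1)) * tripleProductTerm q z (A + 1) B n)
      ((1 + z * q ^ (A + 1)) * S) := by
    simp only [one_sub_zpow_mul_tripleProductTerm_add_one_left hq hq0 hz, one_add_mul]
    exact h.add (((Equiv.subRight (1 : ℤ)).hasSum_iff.2 h).mul_left _)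
  exact (hasSum_mul_left_iff hAB).1 (by rwa [mul_inv_cancel_left₀ hAB])

lemma hasSum_tripleProductTerm_add_one_right (hq : ¬IsOfFinOrder q) (hq0 : q ≠ 0) (hz : z ≠ 0)
    {A B : ℤ} (hAB : 1 - q ^ (A + B + 1) ≠ 0) {S : 𝕜} (h : HasSum (tripleProductTerm q z A B) S) :
    HasSum (tripleProductTerm q z A (B + 1))
      ((1 - q ^ (A + B + 1))⁻¹ * ((1 + z⁻¹ * q ^ B) * S)) := by
  have hsum : HasSum (fun n ↦ (1 - q ^ (A + B + 1)) * tripleProductTerm q z A (B + 1) n)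
      ((1 + z⁻¹ * q ^ B) * S) := by
    simp only [one_sub_zpow_mul_tripleProductTerm_add_one_right hq hq0 hz, one_add_mul]
    exact h.add (((Equiv.addRight (1 : ℤ)).hasSum_iff.2 h).mul_left _)
  exact (hasSum_mul_left_iff hAB).1 (by rwa [mul_inv_cancel_left₀ hAB])

/-- The finite form of the Jacobi triple product identity. -/
lemma hasSum_tripleProductTerm (hq : ¬IsOfFinOrder q) (hq0 : q ≠ 0) (hz : z ≠ 0) (A B : ℕ) :
    HasSum (tripleProductTerm q z A B)
      ((qPochhammer q q (A + B))⁻¹ * (qPochhammer (-(z * q)) q A * qPochhammer (-z⁻¹) q B)) := by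
  have hne (n : ℕ) : 1 - q ^ (n + 1) ≠ 0 := by
    exact_mod_cast one_sub_zpow_natCast_add_one_ne_zero hq n
  induction A with
  | zero =>
    induction B with
    | zero => simpa [qPochhammer_zero] using hasSum_tripleProductTerm_zero_zero q z
    | succ B ih =>
      have h := hasSum_tripleProductTerm_add_one_right hq hq0 hz
        (by exact_mod_cast hne (0 + B)) ih
      convert h using 1
      · norm_cast
      · norm_cast
        rw [← add_assoc, qPochhammer_succ, qPochhammer_succ, mul_inv, pow_succ']
        ring
  | succ A ih =>
    have h := hasSum_tripleProductTerm_add_one_left hq hq0 hz (by exact_mod_cast hne (A + B)) ih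
    convert h using 1
    · norm_cast
    · norm_cast
      rw [add_right_comm, qPochhammer_succ, qPochhammer_succ, mul_inv, pow_succ', pow_succ']
      ring

end Finite

variable {𝕜 : Type*} [NormedField 𝕜] [CompleteSpace 𝕜] {q z : 𝕜}

lemma tendsto_qFactorialInv (hq : ‖q‖ < 1) :
    Tendsto (qFactorialInv q) atTop (𝓝 (qPochhammerInf q q)⁻¹) := by
  rw [← Nat.map_cast_int_atTop, tendsto_map'_iff]
  exact ((tendsto_qPochhammer hq q).inv₀ (qPochhammerInf_ne_zero hq hq)).congr fun n ↦
    (qFactorialInv_natCast q n).symm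

lemma exists_norm_qFactorialInv_le (hq : ‖q‖ < 1) : ∃ C, ∀ m, ‖qFactorialInv q m‖ ≤ C := by
  obtain ⟨C, hC⟩ :=
    ((tendsto_qFactorialInv hq).comp tendsto_natCast_atTop_atTop).norm.bddAbove_range
  refine ⟨C, fun m ↦ ?_⟩
  rcases lt_or_ge m 0 with hm | hm
  · rw [qFactorialInv_of_neg q hm, norm_zero]
    exact (norm_nonneg _).trans (hC ⟨0, rfl⟩)
  · lift m to ℕ using hm
    exact hC ⟨m, rfl⟩

lemma tendsto_tsum_tripleProductTerm (hq : ‖q‖ < 1) (hq0 : q ≠ 0) (hz : z ≠ 0) :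
    Tendsto (fun N : ℕ ↦ ∑' n, tripleProductTerm q z N N n) atTop
      (𝓝 ((qPochhammerInf q q)⁻¹ * (qPochhammerInf q q)⁻¹ * theta q z)) := by
  obtain ⟨C, hC⟩ := exists_norm_qFactorialInv_le hq
  have hlim := tendsto_qFactorialInv hq
  have hN : Tendsto (Nat.cast : ℕ → ℤ) atTop atTop := tendsto_natCast_atTop_atTop
  rw [theta, ← tsum_mul_left]
  refine tendsto_tsum_of_dominated_convergence (bound := fun n ↦ C * C * ‖thetaTerm q z n‖)
    ((summable_norm_thetaTerm hq hq0 hz).mul_left _) (fun n ↦ ?_) (.of_forall fun N n ↦ ?_)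
  · exact ((hlim.comp (tendsto_atTop_add_const_right _ (-n) hN)).mul
      (hlim.comp (tendsto_atTop_add_const_right _ n hN))).mul_const _
  · have hC0 : 0 ≤ C := (norm_nonneg _).trans (hC 0)
    rw [tripleProductTerm, norm_mul, norm_mul]
    gcongr <;> exact hC _

/-- The **Jacobi triple product identity**. -/
theorem theta_eq_qPochhammerInf (hq : ‖q‖ < 1) (hq0 : q ≠ 0) (hz : z ≠ 0) :
    theta q z =
      qPochhammerInf q q * (qPochhammerInf (-(z * q)) q * qPochhammerInf (-z⁻¹) q) := by
  have hfin : ¬IsOfFinOrder q := fun h ↦ hq.ne h.norm_eq_one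
  have hne := qPochhammerInf_ne_zero hq hq
  have hlim := ((((tendsto_qPochhammer hq q).inv₀ hne).comp
    (tendsto_id.atTop_add_atTop tendsto_id)).mul
      ((tendsto_qPochhammer hq (-(z * q))).mul (tendsto_qPochhammer hq (-z⁻¹))))
  have hkey := tendsto_nhds_unique (tendsto_tsum_tripleProductTerm hq hq0 hz)
    (hlim.congr fun N ↦ (hasSum_tripleProductTerm hfin hq0 hz N N).tsum_eq.symm)
  rw [mul_assoc] at hkey
  exact (inv_mul_eq_iff_eq_mul₀ hne).1 (mul_left_cancel₀ (inv_ne_zero hne) hkey)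

lemma theta_eq_one_add_inv_mul (hq : ‖q‖ < 1) (hq0 : q ≠ 0) (hz : z ≠ 0) :
    theta q z = (1 + z⁻¹) *
      (qPochhammerInf q q * (qPochhammerInf (-(z * q)) q * qPochhammerInf (-(z⁻¹ * q)) q)) := by
  rw [theta_eq_qPochhammerInf hq hq0 hz, qPochhammerInf_eq_one_sub_mul hq (-z⁻¹), neg_mul]
  ring

end TripleProduct

section CosetSum

variable {𝕜 : Type*}

/-- The sum of `q ^ (u (u + 1) / 2 + v (v + 1) / 2)` over the pairs `(u, v)` of integers with
`u - 2 v ≡ j` modulo `5`. These pairs form a coset of the sublattice `{(2 a - b, a + 2 b)}`, and the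
sum is taken over the parameters `(a, b)`. -/
noncomputable def cosetSum [DivisionRing 𝕜] [TopologicalSpace 𝕜] (q : 𝕜) (j : ℤ) : 𝕜 :=
  ∑' p : ℤ × ℤ, q ^ (triangular (2 * p.1 - p.2 + j) + triangular (p.1 + 2 * p.2))

/-- The decomposition of `ℤ²` into the cosets of its sublattice `{(2 a - b, a + 2 b)}` of index
five. -/
def cosetEquiv : Fin 5 × (ℤ × ℤ) ≃ ℤ × ℤ where
  toFun p := (2 * p.2.1 - p.2.2 + (p.1 : ℕ), p.2.1 + 2 * p.2.2)
  invFun p := (⟨((p.1 - 2 * p.2) % 5).toNat, by omega⟩,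
    (p.2 + 2 * ((p.1 - 2 * p.2) / 5), -((p.1 - 2 * p.2) / 5)))
  left_inv := by
    rintro ⟨⟨j, hj⟩, a, b⟩
    simp only [Prod.mk.injEq, Fin.mk.injEq]
    omega
  right_inv := by
    rintro ⟨u, v⟩
    simp only [Prod.mk.injEq]
    omega

section Symmetry

variable [DivisionRing 𝕜] [TopologicalSpace 𝕜]

lemma cosetSum_add_five (q : 𝕜) (j : ℤ) : cosetSum q (j + 5) = cosetSum q j := by
  rw [cosetSum, cosetSum, ← (Equiv.addRight ((-2, 1) : ℤ × ℤ)).tsum_eq]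
  refine tsum_congr fun p ↦ ?_
  simp only [Equiv.coe_addRight, Prod.fst_add, Prod.snd_add]
  ring_nf

-- The quarter turn `(u, v) ↦ (v, -u - 1)` preserves the exponent and permutes the cosets.
lemma cosetSum_two_mul_add_two (q : 𝕜) (j : ℤ) : cosetSum q (2 * j + 2) = cosetSum q j := by
  let turn : ℤ × ℤ ≃ ℤ × ℤ :=
    { toFun p := (p.2 - j - 1, -p.1)
      invFun p := (-p.2, p.1 + j + 1)
      left_inv p := by ext <;> ring
      right_inv p := by ext <;> ring }
  rw [cosetSum, cosetSum, ← turn.tsum_eq]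
  refine tsum_congr fun p ↦ congrArg (q ^ ·) ?_
  have hu : 2 * (turn p).1 - (turn p).2 + (2 * j + 2) = p.1 + 2 * p.2 := by
    simp only [turn, Equiv.coe_fn_mk]
    ring
  have hv : (turn p).1 + 2 * (turn p).2 = -(2 * p.1 - p.2 + j + 1) := by
    simp only [turn, Equiv.coe_fn_mk]
    ring
  rw [hu, hv, triangular_neg, triangular_add_one]
  ring

lemma cosetSum_two (q : 𝕜) : cosetSum q 2 = cosetSum q 0 :=
  cosetSum_two_mul_add_two q 0

lemma cosetSum_one (q : 𝕜) : cosetSum q 1 = cosetSum q 0 :=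
  calc cosetSum q 1 = cosetSum q 6 := (cosetSum_add_five q 1).symm
    _ = cosetSum q 2 := cosetSum_two_mul_add_two q 2
    _ = cosetSum q 0 := cosetSum_two q

lemma cosetSum_four (q : 𝕜) : cosetSum q 4 = cosetSum q 0 :=
  (cosetSum_two_mul_add_two q 1).trans (cosetSum_one q)

end Symmetry

variable [NormedField 𝕜] [CompleteSpace 𝕜] {q : 𝕜}

lemma theta_mul_theta_eq_sum_cosetSum (hq : ‖q‖ < 1) (hq0 : q ≠ 0) {ζ : 𝕜} (hζ : ζ ^ 5 = 1) :
    theta q ζ * theta q (ζ ^ 2)⁻¹ = ∑ j : Fin 5, ζ ^ (j : ℕ) * cosetSum q (j : ℕ) := by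
  have hζ0 : ζ ≠ 0 := by
    rintro rfl
    norm_num at hζ
  have hs₁ := summable_norm_thetaTerm hq hq0 hζ0
  have hs₂ := summable_norm_thetaTerm hq hq0 (inv_ne_zero (pow_ne_zero 2 hζ0))
  have hs := cosetEquiv.summable_iff.2 (summable_mul_of_summable_norm hs₁ hs₂)
  rw [theta, theta, tsum_mul_tsum_of_summable_norm hs₁ hs₂, ← cosetEquiv.tsum_eq]
  refine hs.tsum_prod.trans ((tsum_fintype _).trans (sum_congr rfl fun j _ ↦ ?_))
  rw [cosetSum, ← tsum_mul_left]
  refine tsum_congr fun ⟨a, b⟩ ↦ ?_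
  have hζ5 : ζ ^ (5 * b) = 1 := by
    rw [zpow_mul, show ζ ^ (5 : ℤ) = 1 by exact_mod_cast hζ, one_zpow]
  have hchar : ζ ^ (2 * a - b + (j : ℕ) : ℤ) * (ζ ^ 2)⁻¹ ^ (a + 2 * b) = ζ ^ (j : ℕ) := by
    rw [← zpow_natCast ζ 2, ← zpow_neg, ← zpow_mul, ← zpow_add₀ hζ0, ← mul_one (_ ^ _), ← hζ5,
      ← zpow_add₀ hζ0, ← zpow_natCast ζ j]
    push_cast
    ring_nf
  simp only [Function.comp_apply, cosetEquiv, Equiv.coe_fn_mk, thetaTerm]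
  rw [zpow_add₀ hq0, ← hchar]
  ring

lemma theta_mul_theta_eq_add_cosetSum (hq : ‖q‖ < 1) (hq0 : q ≠ 0) {ζ : 𝕜} (hζ : ζ ^ 5 = 1) :
    theta q ζ * theta q (ζ ^ 2)⁻¹ =
      (1 + ζ + ζ ^ 2 + ζ ^ 4) * cosetSum q 0 + ζ ^ 3 * cosetSum q 3 := by
  have h := theta_mul_theta_eq_sum_cosetSum hq hq0 hζ
  rw [Fin.sum_univ_five] at h
  change _ = ζ ^ 0 * cosetSum q 0 + ζ ^ 1 * cosetSum q 1 + ζ ^ 2 * cosetSum q 2 +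
    ζ ^ 3 * cosetSum q 3 + ζ ^ 4 * cosetSum q 4 at h
  rw [h, cosetSum_one, cosetSum_two, cosetSum_four]
  ring

lemma cosetSum_eq_theta_mul_theta (hq : ‖q‖ < 1) (hq0 : q ≠ 0) (j : ℤ) :
    cosetSum q j = q ^ triangular j *
      (theta (q ^ 5) (q ^ (2 * j - 1)) * theta (q ^ 5) (q ^ (-j - 2))) := by
  have hs (m : ℤ) : Summable fun n ↦ ‖thetaTerm (q ^ 5) (q ^ m) n‖ :=
    summable_norm_thetaTerm (norm_pow_lt_one hq (by norm_num)) (pow_ne_zero 5 hq0)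
      (zpow_ne_zero m hq0)
  rw [theta, theta, tsum_mul_tsum_of_summable_norm (hs _) (hs _), ← tsum_mul_left, cosetSum]
  refine tsum_congr fun ⟨a, b⟩ ↦ ?_
  simp only [thetaTerm, ← zpow_natCast q, ← zpow_mul, ← zpow_add₀ hq0]
  congr 1
  push_cast
  linarith [two_mul_triangular (2 * a - b + j), two_mul_triangular (a + 2 * b),
    two_mul_triangular a, two_mul_triangular b, two_mul_triangular j]

lemma cosetSum_three (hq : ‖q‖ < 1) (hq0 : q ≠ 0) :
    cosetSum q 3 = q * theta (q ^ 5) 1 ^ 2 := by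
  have hinv : theta (q ^ 5) (q ^ (-5 : ℤ)) = theta (q ^ 5) 1 := by
    rw [← theta_inv (pow_ne_zero 5 hq0) 1, mul_one, zpow_neg]
    norm_cast
  calc cosetSum q 3 = cosetSum q (-2 + 5) := by norm_num
    _ = cosetSum q (-2) := cosetSum_add_five q (-2)
    _ = q ^ (1 : ℤ) * (theta (q ^ 5) (q ^ (-5 : ℤ)) * theta (q ^ 5) (q ^ (0 : ℤ))) :=
      by
        simpa [triangular] using cosetSum_eq_theta_mul_theta hq hq0 (-2)
    _ = q * theta (q ^ 5) 1 ^ 2 := by rw [hinv, zpow_one, zpow_zero, sq]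

lemma theta_one_sq (hq : ‖q‖ < 1) (hq0 : q ≠ 0) :
    theta q 1 ^ 2 = 4 * cosetSum q 0 + q * theta (q ^ 5) 1 ^ 2 := by
  have h := theta_mul_theta_eq_add_cosetSum hq hq0 (one_pow 5)
  rw [cosetSum_three hq hq0, one_pow, inv_one] at h
  linear_combination h

lemma cosetSum_zero_mul_qPochhammerInf (hq : ‖q‖ < 1) (hq0 : q ≠ 0) :
    cosetSum q 0 * qPochhammerInf (-q ^ 5) (q ^ 5) =
      qPochhammerInf (q ^ 5) (q ^ 5) ^ 2 * qPochhammerInf (-q) q := by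
  have hq5 := norm_pow_lt_one hq (m := 5) (by norm_num)
  have hdissect := prod_qPochhammerInf_mul_pow hq (-q) (m := 5) (by norm_num)
  simp only [prod_range_succ, prod_range_zero, one_mul, neg_mul, ← pow_succ', zero_add,
    pow_one] at hdissect
  have hθ₁ : theta (q ^ 5) (q ^ (-1 : ℤ)) = qPochhammerInf (q ^ 5) (q ^ 5) *
      (qPochhammerInf (-q ^ 4) (q ^ 5) * qPochhammerInf (-q) (q ^ 5)) := by
    rw [zpow_neg_one, theta_eq_qPochhammerInf hq5 (pow_ne_zero 5 hq0) (inv_ne_zero hq0), inv_inv,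
      show q⁻¹ * q ^ 5 = q ^ 4 by field_simp]
  have hθ₂ : theta (q ^ 5) (q ^ (-2 : ℤ)) = qPochhammerInf (q ^ 5) (q ^ 5) *
      (qPochhammerInf (-q ^ 3) (q ^ 5) * qPochhammerInf (-q ^ 2) (q ^ 5)) := by
    rw [theta_eq_qPochhammerInf hq5 (pow_ne_zero 5 hq0) (zpow_ne_zero _ hq0), zpow_neg, inv_inv,
      show (q ^ (2 : ℤ))⁻¹ * q ^ 5 = q ^ 3 by field_simp]
    norm_cast
  have hC : cosetSum q 0 = theta (q ^ 5) (q ^ (-1 : ℤ)) * theta (q ^ 5) (q ^ (-2 : ℤ)) := by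
    simpa [triangular] using cosetSum_eq_theta_mul_theta hq hq0 0
  rw [hC, hθ₁, hθ₂, ← hdissect]
  ring

lemma cosetSum_zero_sub_three_mul_qPochhammerInf_of_isPrimitiveRoot (hq : ‖q‖ < 1)
    (hq0 : q ≠ 0) {ζ : 𝕜} (hζ : IsPrimitiveRoot ζ 5) :
    (cosetSum q 0 - cosetSum q 3) * qPochhammerInf (-q) q =
      qPochhammerInf q q ^ 2 * qPochhammerInf (-q ^ 5) (q ^ 5) := by
  have hζ5 := hζ.pow_eq_one
  have hζ0 := hζ.ne_zero (by norm_num)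
  have hsum := hζ.geom_sum_eq_zero (by norm_num)
  have hprod := prod_qPochhammerInf_pow_mul_of_isPrimitiveRoot hq hζ (by norm_num) (-q)
  simp only [sum_range_succ, sum_range_zero, prod_range_succ, prod_range_zero, mul_neg, zero_add,
    one_mul, pow_zero, pow_one, Odd.neg_pow (by decide : Odd 5)] at hsum hprod
  have hinv : ζ⁻¹ = ζ ^ 4 := inv_eq_of_mul_eq_one_right (by rw [← pow_succ', hζ5])
  have hinv₂ : (ζ ^ 2)⁻¹ = ζ ^ 3 := inv_eq_of_mul_eq_one_right (by rw [← pow_add, hζ5])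
  have hθ := theta_mul_theta_eq_add_cosetSum hq hq0 hζ5
  rw [theta_eq_one_add_inv_mul hq hq0 hζ0, theta_eq_one_add_inv_mul hq hq0
    (inv_ne_zero (pow_ne_zero 2 hζ0)), inv_inv, hinv, hinv₂] at hθ
  have hcoeff : 1 + ζ + ζ ^ 2 + ζ ^ 4 = -ζ ^ 3 := by linear_combination hsum
  have hfactor : (1 + ζ ^ 4) * (1 + ζ ^ 2) = -ζ ^ 3 := by
    linear_combination hsum + ζ * hζ5
  refine mul_left_cancel₀ (neg_ne_zero.2 (pow_ne_zero 3 hζ0)) ?_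
  rw [hcoeff] at hθ
  linear_combination -qPochhammerInf (-q) q * hθ +
    (1 + ζ ^ 4) * (1 + ζ ^ 2) * qPochhammerInf q q ^ 2 * hprod +
    qPochhammerInf q q ^ 2 * qPochhammerInf (-q ^ 5) (q ^ 5) * hfactor

end CosetSum

section OfReal

variable {q : ℝ}

lemma ofReal_qPochhammerInf (hq : ‖q‖ < 1) (a : ℝ) :
    ((qPochhammerInf a q : ℝ) : ℂ) = qPochhammerInf (a : ℂ) q := by
  rw [qPochhammerInf, qPochhammerInf, ← Complex.ofRealHom_eq_coe,
    (multipliable_one_sub_mul_pow hq a).map_tprod Complex.ofRealHom Complex.continuous_ofReal]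
  simp only [Complex.ofRealHom_eq_coe, Complex.ofReal_sub, Complex.ofReal_mul, Complex.ofReal_pow,
    Complex.ofReal_one]

lemma ofReal_cosetSum (q : ℝ) (j : ℤ) : ((cosetSum q j : ℝ) : ℂ) = cosetSum (q : ℂ) j := by
  simp only [cosetSum, Complex.ofReal_tsum, Complex.ofReal_zpow]

lemma cosetSum_zero_sub_three_mul_qPochhammerInf (hq : ‖q‖ < 1) (hq0 : q ≠ 0) :
    (cosetSum q 0 - cosetSum q 3) * qPochhammerInf (-q) q =
      qPochhammerInf q q ^ 2 * qPochhammerInf (-q ^ 5) (q ^ 5) := by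
  have h := cosetSum_zero_sub_three_mul_qPochhammerInf_of_isPrimitiveRoot (q := (q : ℂ))
    (by rwa [Complex.norm_real]) (Complex.ofReal_ne_zero.2 hq0)
    (Complex.isPrimitiveRoot_exp 5 (by norm_num))
  have hq5 := norm_pow_lt_one hq (m := 5) (by norm_num)
  have h₁ := ofReal_qPochhammerInf hq (-q)
  have h₂ := ofReal_qPochhammerInf hq q
  have h₃ := ofReal_qPochhammerInf hq5 (-q ^ 5)
  push_cast at h₁ h₂ h₃
  rw [← h₁, ← h₂, ← h₃, ← ofReal_cosetSum, ← ofReal_cosetSum] at h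
  exact_mod_cast h

end OfReal

section Ramanujan

lemma theta_pow_three {𝕜 : Type*} [NormedField 𝕜] [CompleteSpace 𝕜] {q : 𝕜} (hq : ‖q‖ < 1)
    (hq0 : q ≠ 0) : theta (q ^ 3) (-(q ^ 2)⁻¹) = qPochhammerInf q q := by
  rw [theta_eq_qPochhammerInf (norm_pow_lt_one hq (by norm_num)) (pow_ne_zero 3 hq0)
    (neg_ne_zero.2 (inv_ne_zero (pow_ne_zero 2 hq0))), ← prod_qPochhammerInf_mul_pow hq q
    (m := 3) (by norm_num), inv_neg, inv_inv, neg_neg, neg_mul, neg_neg,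
    show (q ^ 2)⁻¹ * q ^ 3 = q by field_simp]
  simp only [prod_range_succ, prod_range_zero, one_mul, ← pow_succ', zero_add, pow_one]
  ring

variable {q : ℝ}

lemma fneg_eq_qPochhammerInf (hq : ‖q‖ < 1) (hq0 : q ≠ 0) : fneg q = qPochhammerInf q q := by
  rw [← theta_pow_three hq hq0, fneg, theta]
  refine tsum_congr fun n ↦ ?_
  have hexp : n * (3 * n - 1) / 2 = 3 * triangular n - 2 * n := by
    have h := two_mul_triangular n
    have : n * (3 * n - 1) = 3 * (n * (n + 1)) - 4 * n := by ring
    omega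
  rw [thetaTerm, hexp, zpow_sub₀ hq0, zpow_mul, zpow_mul, neg_eq_neg_one_mul (_⁻¹), mul_zpow,
    inv_zpow]
  norm_cast
  ring

lemma fneg_ne_zero (hq : ‖q‖ < 1) (hq0 : q ≠ 0) : fneg q ≠ 0 := by
  rw [fneg_eq_qPochhammerInf hq hq0]
  exact qPochhammerInf_ne_zero hq hq

lemma fneg_pow_ne_zero (hq : ‖q‖ < 1) (hq0 : q ≠ 0) {m : ℕ} (hm : m ≠ 0) : fneg (q ^ m) ≠ 0 :=
  fneg_ne_zero (norm_pow_lt_one hq hm) (pow_ne_zero m hq0)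

lemma fneg_mul_qPochhammerInf_neg (hq : ‖q‖ < 1) (hq0 : q ≠ 0) :
    fneg q * qPochhammerInf (-q) q = fneg (q ^ 2) := by
  rw [fneg_eq_qPochhammerInf hq hq0,
    fneg_eq_qPochhammerInf (norm_pow_lt_one hq two_ne_zero) (pow_ne_zero 2 hq0)]
  simpa only [prod_range_succ, prod_range_zero, one_mul, pow_zero, pow_one, neg_one_mul] using
    prod_qPochhammerInf_pow_mul_of_isPrimitiveRoot hq (IsPrimitiveRoot.neg_one 0 (by norm_num))
      two_pos q

lemma two_mul_psi (hq : ‖q‖ < 1) (hq0 : q ≠ 0) : 2 * psi q = theta q 1 := by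
  have hnat (n : ℕ) : thetaTerm q 1 n = q ^ (n * (n + 1) / 2) := by
    rw [thetaTerm, one_zpow, mul_one, triangular]
    norm_cast
  have hneg (n : ℕ) : thetaTerm q 1 (-(n + 1)) = q ^ (n * (n + 1) / 2) := by
    rw [← hnat, thetaTerm, thetaTerm, triangular_neg, triangular_add_one, add_sub_cancel_right,
      one_zpow, one_zpow]
  have hs : Summable fun n : ℕ ↦ q ^ (n * (n + 1) / 2) := by
    simpa only [hnat] using (summable_norm_thetaTerm_natCast hq hq0 one_ne_zero).of_norm
  rw [theta, tsum_of_nat_of_neg_add_one (by simpa only [hnat] using hs)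
    (by simpa only [hneg] using hs)]
  simp only [hnat, hneg, ← two_mul, psi]

lemma psi_eq_fneg_sq_div (hq : ‖q‖ < 1) (hq0 : q ≠ 0) : psi q = fneg (q ^ 2) ^ 2 / fneg q := by
  have hθ := theta_eq_one_add_inv_mul hq hq0 one_ne_zero
  rw [← two_mul_psi hq hq0, inv_one, one_mul, ← fneg_eq_qPochhammerInf hq hq0] at hθ
  rw [eq_div_iff (fneg_ne_zero hq hq0), ← fneg_mul_qPochhammerInf_neg hq hq0]
  linear_combination fneg q / 2 * hθ

lemma psi_ne_zero (hq : ‖q‖ < 1) (hq0 : q ≠ 0) : psi q ≠ 0 := by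
  rw [psi_eq_fneg_sq_div hq hq0]
  exact div_ne_zero (pow_ne_zero 2 (fneg_pow_ne_zero hq hq0 two_ne_zero)) (fneg_ne_zero hq hq0)

lemma cosetSum_three_eq_psi (hq : ‖q‖ < 1) (hq0 : q ≠ 0) :
    cosetSum q 3 = 4 * (q * psi (q ^ 5) ^ 2) := by
  rw [cosetSum_three hq hq0,
    ← two_mul_psi (norm_pow_lt_one hq (by norm_num)) (pow_ne_zero 5 hq0)]
  ring

lemma cosetSum_zero_eq_psi (hq : ‖q‖ < 1) (hq0 : q ≠ 0) :
    cosetSum q 0 = psi q ^ 2 - q * psi (q ^ 5) ^ 2 := by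
  have h := theta_one_sq hq hq0
  rw [← cosetSum_three hq hq0, cosetSum_three_eq_psi hq hq0, ← two_mul_psi hq hq0] at h
  linear_combination -h / 4

lemma qPochhammerInf_neg_eq_fneg_div (hq : ‖q‖ < 1) (hq0 : q ≠ 0) :
    qPochhammerInf (-q) q = fneg (q ^ 2) / fneg q :=
  eq_div_of_mul_eq (fneg_ne_zero hq hq0) <| by
    rw [mul_comm, fneg_mul_qPochhammerInf_neg hq hq0]

lemma psi_sq_sub_mul_psi_sq (hq : ‖q‖ < 1) (hq0 : q ≠ 0) :
    psi q ^ 2 - q * psi (q ^ 5) ^ 2 =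
      fneg (q ^ 2) * fneg (q ^ 5) ^ 3 / (fneg q * fneg (q ^ 10)) := by
  have hq5 := norm_pow_lt_one hq (m := 5) (by norm_num)
  have hq5₀ := pow_ne_zero 5 hq0
  have h1 := fneg_ne_zero hq hq0
  have h5 := fneg_ne_zero hq5 hq5₀
  have h10 := fneg_pow_ne_zero hq hq0 (m := 10) (by norm_num)
  have h := cosetSum_zero_mul_qPochhammerInf hq hq0
  rw [cosetSum_zero_eq_psi hq hq0, ← fneg_eq_qPochhammerInf hq5 hq5₀,
    qPochhammerInf_neg_eq_fneg_div hq5 hq5₀, qPochhammerInf_neg_eq_fneg_div hq hq0,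
    ← pow_mul] at h
  field_simp at h ⊢
  linear_combination h

lemma psi_sq_sub_five_mul_psi_sq (hq : ‖q‖ < 1) (hq0 : q ≠ 0) :
    psi q ^ 2 - 5 * (q * psi (q ^ 5) ^ 2) =
      fneg q ^ 3 * fneg (q ^ 10) / (fneg (q ^ 2) * fneg (q ^ 5)) := by
  have hq5 := norm_pow_lt_one hq (m := 5) (by norm_num)
  have hq5₀ := pow_ne_zero 5 hq0
  have h1 := fneg_ne_zero hq hq0
  have h2 := fneg_pow_ne_zero hq hq0 two_ne_zero
  have h5 := fneg_ne_zero hq5 hq5₀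
  have h := cosetSum_zero_sub_three_mul_qPochhammerInf hq hq0
  rw [cosetSum_zero_eq_psi hq hq0, cosetSum_three_eq_psi hq hq0, ← fneg_eq_qPochhammerInf hq hq0,
    qPochhammerInf_neg_eq_fneg_div hq5 hq5₀, qPochhammerInf_neg_eq_fneg_div hq hq0,
    ← pow_mul] at h
  field_simp at h ⊢
  linear_combination h

end Ramanujan

end QSeries

open QSeries in
theorem stmt_4_general {q V : ℝ} (hq : |q| < 1) (hq0 : q ≠ 0)
    (hV : V = psi q ^ 2 / (q * psi (q ^ 5) ^ 2)) :
    q * fneg q ^ 6 * fneg (q ^ 10) ^ 6 / (fneg (q ^ 2) ^ 6 * fneg (q ^ 5) ^ 6)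
      = (V - 5) / (V * (V - 1)) := by
  have hq5 : |q ^ 5| < 1 := norm_pow_lt_one (R := ℝ) hq (by norm_num)
  have hq5₀ := pow_ne_zero 5 hq0
  have h1 := fneg_ne_zero hq hq0
  have h2 := fneg_pow_ne_zero hq hq0 two_ne_zero
  have h5 := fneg_ne_zero hq5 hq5₀
  have h10 := fneg_pow_ne_zero hq hq0 (m := 10) (by norm_num)
  have hden : q * psi (q ^ 5) ^ 2 ≠ 0 := mul_ne_zero hq0 (pow_ne_zero 2 (psi_ne_zero hq5 hq5₀))
  have hV₁ : V - 1 = (psi q ^ 2 - q * psi (q ^ 5) ^ 2) / (q * psi (q ^ 5) ^ 2) := by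
    rw [hV, sub_div, div_self hden]
  have hV₅ : V - 5 = (psi q ^ 2 - 5 * (q * psi (q ^ 5) ^ 2)) / (q * psi (q ^ 5) ^ 2) := by
    rw [hV, sub_div, mul_div_cancel_right₀ _ hden]
  have hψ₅ : psi (q ^ 5) = fneg (q ^ 10) ^ 2 / fneg (q ^ 5) := by
    rw [psi_eq_fneg_sq_div hq5 hq5₀, ← pow_mul]
  rw [hV₁, hV₅, hV, psi_sq_sub_mul_psi_sq hq hq0, psi_sq_sub_five_mul_psi_sq hq hq0,
    psi_eq_fneg_sq_div hq hq0, hψ₅]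
  field_simp

theorem stmt_4 (q V : ℝ) (hq0 : 0 < q) (hq1 : q < 1)
    (hV : V = psi q ^ 2 / (q * psi (q ^ 5) ^ 2)) :
    q * fneg q ^ 6 * fneg (q ^ 10) ^ 6 / (fneg (q ^ 2) ^ 6 * fneg (q ^ 5) ^ 6)
      = (V - 5) / (V * (V - 1)) :=
  stmt_4_general (by rwa [abs_of_pos hq0]) hq0.ne' hV
end

section
/- Let 0 < q < 1, let A := f(-q)f(-q^2)/(q^{1/2} f(-q^5) f(-q^10)) and B_2 := f(-q^2)f(-q^4)/(q f(-q^10) f(-q^20)), and set P := A·B_2 and Q := A/B_2. Then (Q^4 + 1/Q^4) - 3(Q^2 + 1/Q^2) - (P + 5^2/P)(Q + 1/Q) - 12 = 0. -/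
open Real

/-!
Let `h(q)` be the eta quotient that is a Hauptmodul of `Γ₀(10)`. Summing over the cosets of the
ideal `(2 - i)` of `ℤ[i]`, which quarter turns permute, gives five-dissections of `φ²` and `ψ²`;
through Jacobi's triple product they say that `h - 4` and `h + 1` are eta quotients as well. Hence
`A² = (h + 1)(h - 4) / h`, and the level-five Hauptmodul at `q` and at `q²` is a rational function
of `h(q)`. Computing it at `q²` from `h(q)` and from `h(q²)` yields
`h(q)² h(q²) = h(q²)² + 2 h(q) h(q²) + 4 h(q)`. This makes `A² + B₂²` and `A² B₂²` rational in
`r = h(q²) / h(q)`, and the modular equation becomes an identity in `r`.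
-/

open Filter Topology

section QPochhammer

variable {𝕜 : Type*} [NormedField 𝕜]

/-- The finite `q`-Pochhammer symbol `(a; q)_n`. -/
def qPoch (a q : 𝕜) (n : ℕ) : 𝕜 := ∏ k ∈ Finset.range n, (1 - a * q ^ k)

/-- The infinite `q`-Pochhammer symbol `(a; q)_∞`, meaningful for `‖q‖ < 1`. -/
noncomputable def qPochInf (a q : 𝕜) : 𝕜 := ∏' k : ℕ, (1 - a * q ^ k)

lemma qPoch_succ (a q : 𝕜) (n : ℕ) : qPoch a q (n + 1) = qPoch a q n * (1 - a * q ^ n) :=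
  Finset.prod_range_succ _ _

lemma norm_pow_lt_one {q : 𝕜} (hq : ‖q‖ < 1) {m : ℕ} (hm : m ≠ 0) : ‖q ^ m‖ < 1 := by
  simpa only [norm_pow] using pow_lt_one₀ (norm_nonneg q) hq hm

lemma qPoch_self_ne_zero {q : 𝕜} (hq : ‖q‖ < 1) (n : ℕ) : qPoch q q n ≠ 0 := by
  refine Finset.prod_ne_zero_iff.2 fun k _ h ↦ ?_
  have hlt : ‖q ^ (k + 1)‖ < 1 := norm_pow_lt_one hq k.succ_ne_zero
  rw [pow_succ', ← sub_eq_zero.1 h, norm_one] at hlt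
  exact hlt.false

lemma summable_norm_mul_pow (a : 𝕜) {q : 𝕜} (hq : ‖q‖ < 1) :
    Summable fun k : ℕ ↦ ‖-(a * q ^ k)‖ := by
  simpa only [norm_neg, norm_mul, norm_pow] using
    (summable_geometric_of_lt_one (norm_nonneg q) hq).mul_left ‖a‖

variable [CompleteSpace 𝕜] {q : 𝕜}

lemma multipliable_one_sub_mul_pow (a : 𝕜) (hq : ‖q‖ < 1) :
    Multipliable fun k : ℕ ↦ 1 - a * q ^ k := by
  simpa only [sub_eq_add_neg] using multipliable_one_add_of_summable (summable_norm_mul_pow a hq)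

lemma tendsto_qPoch (a : 𝕜) (hq : ‖q‖ < 1) :
    Tendsto (qPoch a q) atTop (𝓝 (qPochInf a q)) :=
  (multipliable_one_sub_mul_pow a hq).hasProd.tendsto_prod_nat

lemma qPochInf_self_ne_zero (hq : ‖q‖ < 1) : qPochInf q q ≠ 0 := by
  simp only [qPochInf, sub_eq_add_neg]
  refine tprod_one_add_ne_zero_of_summable (fun k ↦ ?_) (summable_norm_mul_pow q hq)
  have := qPoch_self_ne_zero hq (k + 1)
  rw [qPoch_succ, sub_eq_add_neg] at this
  exact right_ne_zero_of_mul this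

lemma qPochInf_eq_one_sub_mul (a : 𝕜) (hq : ‖q‖ < 1) :
    qPochInf a q = (1 - a) * qPochInf (a * q) q := by
  have hshift : ∀ k : ℕ, 1 - a * q ^ (k + 1) = 1 - a * q * q ^ k := fun k ↦ by ring
  rw [qPochInf, tprod_eq_zero_mul' ((multipliable_one_sub_mul_pow (a * q) hq).congr
    fun k ↦ (hshift k).symm), pow_zero, mul_one, qPochInf, tprod_congr hshift]

lemma qPochInf_neg_mul_qPochInf (a : 𝕜) (hq : ‖q‖ < 1) :
    qPochInf (-a) q * qPochInf a q = qPochInf (a ^ 2) (q ^ 2) := by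
  rw [qPochInf, qPochInf, qPochInf, ← (multipliable_one_sub_mul_pow _ hq).tprod_mul
    (multipliable_one_sub_mul_pow _ hq)]
  exact tprod_congr fun k ↦ by ring

lemma qPochInf_dissection (a : 𝕜) (hq : ‖q‖ < 1) (m : ℕ) [NeZero m] :
    qPochInf a q = ∏ r : Fin m, qPochInf (a * q ^ (r : ℕ)) (q ^ m) := by
  let e : Fin m × ℕ ≃ ℕ := (Equiv.prodComm _ _).trans (Nat.divModEquiv m).symm
  have hterm : ∀ r k, 1 - a * q ^ e (r, k) = 1 - a * q ^ (r : ℕ) * (q ^ m) ^ k := fun r k ↦ by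
    simp only [e, Equiv.trans_apply, Equiv.prodComm_apply, Prod.swap_prod_mk,
      Nat.divModEquiv_symm_apply]
    ring
  have hmul : ∀ r : Fin m, Multipliable fun k ↦ 1 - a * q ^ (r : ℕ) * (q ^ m) ^ k := fun r ↦
    multipliable_one_sub_mul_pow _ (norm_pow_lt_one hq (NeZero.ne m))
  calc qPochInf a q = ∏' p, (1 - a * q ^ e p) := (e.tprod_eq fun k ↦ 1 - a * q ^ k).symm
    _ = ∏' r, ∏' k, (1 - a * q ^ e (r, k)) :=
      (e.multipliable_iff.2 (multipliable_one_sub_mul_pow a hq)).tprod_prod'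
        fun r ↦ (hmul r).congr fun k ↦ (hterm r k).symm
    _ = ∏ r : Fin m, qPochInf (a * q ^ (r : ℕ)) (q ^ m) := by
      simp only [hterm, tprod_fintype, qPochInf]

end QPochhammer

section InvQFactorial

variable {𝕜 : Type*} [NormedField 𝕜] {q : 𝕜}

/-- The reciprocal `1 / (q; q)_m`, extended by zero to `m < 0`, so that the recurrence
`invQFactorial_sub_one` holds for all `m : ℤ` and sums over `ℤ` need no truncation. -/
def invQFactorial (q : 𝕜) : ℤ → 𝕜
  | .ofNat n => (qPoch q q n)⁻¹
  | .negSucc _ => 0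

lemma invQFactorial_natCast (q : 𝕜) (n : ℕ) : invQFactorial q n = (qPoch q q n)⁻¹ := rfl

lemma invQFactorial_of_neg (q : 𝕜) {m : ℤ} (hm : m < 0) : invQFactorial q m = 0 := by
  obtain ⟨n, rfl⟩ := Int.eq_negSucc_of_lt_zero hm
  rfl

lemma invQFactorial_sub_one (hq : ‖q‖ < 1) (m : ℤ) :
    invQFactorial q (m - 1) = (1 - q ^ m) * invQFactorial q m := by
  rcases lt_trichotomy m 0 with hm | rfl | hm
  · rw [invQFactorial_of_neg q hm, invQFactorial_of_neg q (by omega), mul_zero]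
  · rw [invQFactorial_of_neg q (by omega), zpow_zero, sub_self, zero_mul]
  · obtain ⟨n, rfl⟩ : ∃ n : ℕ, m = (n + 1 : ℕ) := ⟨(m - 1).toNat, by omega⟩
    have hne := qPoch_self_ne_zero hq (n + 1)
    rw [show ((n + 1 : ℕ) : ℤ) - 1 = n by omega, zpow_natCast, invQFactorial_natCast,
      invQFactorial_natCast]
    rw [qPoch_succ, ← pow_succ'] at hne ⊢
    rw [mul_inv_rev, mul_inv_cancel_left₀ (right_ne_zero_of_mul hne)]

lemma invQFactorial_mul_pascal (hq : ‖q‖ < 1) (hq0 : q ≠ 0) (k l : ℤ) :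
    (1 - q ^ (k + l)) * (invQFactorial q k * invQFactorial q l) =
      invQFactorial q (k - 1) * invQFactorial q l +
        q ^ k * (invQFactorial q k * invQFactorial q (l - 1)) := by
  rw [invQFactorial_sub_one hq, invQFactorial_sub_one hq, zpow_add₀ hq0]
  ring

variable [CompleteSpace 𝕜]

lemma tendsto_invQFactorial (hq : ‖q‖ < 1) :
    Tendsto (invQFactorial q) atTop (𝓝 (qPochInf q q)⁻¹) := by
  rw [← Nat.map_cast_int_atTop, tendsto_map'_iff]
  exact (tendsto_qPoch q hq).inv₀ (qPochInf_self_ne_zero hq)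

lemma exists_norm_invQFactorial_le (hq : ‖q‖ < 1) : ∃ C, ∀ m, ‖invQFactorial q m‖ ≤ C := by
  obtain ⟨C, hC⟩ := (Metric.isBounded_range_of_tendsto _
    ((tendsto_qPoch q hq).inv₀ (qPochInf_self_ne_zero hq))).exists_norm_le
  refine ⟨C, fun m ↦ ?_⟩
  cases m with
  | ofNat n => exact hC _ ⟨n, rfl⟩
  | negSucc n => exact norm_zero.trans_le ((norm_nonneg _).trans (hC _ ⟨0, rfl⟩))

end InvQFactorial

section TripleProduct

variable {𝕜 : Type*} [NormedField 𝕜] {a b : 𝕜}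

/-- The `j`-th term `a ^ (j (j + 1) / 2) * b ^ (j (j - 1) / 2)` of Ramanujan's theta series. -/
def thetaTerm (a b : 𝕜) (j : ℤ) : 𝕜 := a ^ (j * (j + 1) / 2) * b ^ (j * (j - 1) / 2)

/-- Ramanujan's two-variable theta function `f(a, b)`, convergent for `‖a * b‖ < 1`. -/
noncomputable def theta (a b : 𝕜) : 𝕜 := ∑' j : ℤ, thetaTerm a b j

lemma two_mul_triangle (j : ℤ) : 2 * (j * (j + 1) / 2) = j * (j + 1) :=
  Int.mul_ediv_cancel' (Int.even_mul_succ_self j).two_dvd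

lemma two_mul_triangle_pred (j : ℤ) : 2 * (j * (j - 1) / 2) = j * (j - 1) :=
  Int.mul_ediv_cancel' (Int.even_mul_pred_self j).two_dvd

lemma thetaTerm_ne_zero (ha : a ≠ 0) (hb : b ≠ 0) (j : ℤ) : thetaTerm a b j ≠ 0 :=
  mul_ne_zero (zpow_ne_zero _ ha) (zpow_ne_zero _ hb)

lemma thetaTerm_neg (a b : 𝕜) (j : ℤ) : thetaTerm a b (-j) = thetaTerm b a j := by
  rw [thetaTerm, thetaTerm, mul_comm]
  ring_nf

lemma thetaTerm_succ (ha : a ≠ 0) (hb : b ≠ 0) (j : ℤ) :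
    thetaTerm a b (j + 1) = thetaTerm a b j * (a * (a * b) ^ j) := by
  have h1 : (j + 1) * (j + 1 + 1) / 2 = j * (j + 1) / 2 + (j + 1) := by
    linarith [two_mul_triangle j, two_mul_triangle (j + 1)]
  have h2 : (j + 1) * (j + 1 - 1) / 2 = j * (j - 1) / 2 + j := by
    linarith [two_mul_triangle_pred j, two_mul_triangle_pred (j + 1)]
  rw [thetaTerm, thetaTerm, h1, h2, zpow_add₀ ha, zpow_add₀ hb, zpow_add_one₀ ha, mul_zpow]
  ring

lemma summable_norm_thetaTerm_natCast (ha : a ≠ 0) (hb : b ≠ 0) (hab : ‖a * b‖ < 1) :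
    Summable fun n : ℕ ↦ ‖thetaTerm a b n‖ := by
  have hne := fun n : ℕ ↦ norm_ne_zero_iff.2 (thetaTerm_ne_zero ha hb n)
  refine summable_of_ratio_test_tendsto_lt_one (l := 0) one_pos (Eventually.of_forall hne) ?_
  have hlim := (tendsto_pow_atTop_nhds_zero_of_lt_one (norm_nonneg _) hab).const_mul ‖a‖
  rw [mul_zero] at hlim
  refine hlim.congr fun n ↦ ?_
  rw [norm_norm, norm_norm, Nat.cast_succ, thetaTerm_succ ha hb, norm_mul (thetaTerm a b n),
    mul_div_cancel_left₀ _ (hne n), zpow_natCast,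
    norm_mul a (_ ^ n), norm_pow]

lemma summable_norm_thetaTerm (ha : a ≠ 0) (hb : b ≠ 0) (hab : ‖a * b‖ < 1) :
    Summable fun j : ℤ ↦ ‖thetaTerm a b j‖ := by
  refine .of_nat_of_neg (summable_norm_thetaTerm_natCast ha hb hab) ?_
  simpa only [thetaTerm_neg] using summable_norm_thetaTerm_natCast hb ha (by rwa [mul_comm])

/-- The `j`-th term of the finite triple product with `m` factors in `a` and `n` factors in `b`. -/
noncomputable def finiteTripleTerm (a b : 𝕜) (m n : ℕ) (j : ℤ) : 𝕜 :=
  qPoch (a * b) (a * b) (m + n) *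
    (invQFactorial (a * b) (m - j) * invQFactorial (a * b) (n + j)) * thetaTerm a b j

lemma finiteTripleTerm_neg (a b : 𝕜) (m n : ℕ) (j : ℤ) :
    finiteTripleTerm a b m n (-j) = finiteTripleTerm b a n m j := by
  rw [finiteTripleTerm, finiteTripleTerm, thetaTerm_neg, sub_neg_eq_add, ← sub_eq_add_neg,
    add_comm m, mul_comm a, mul_comm (invQFactorial _ _)]

lemma finiteTripleTerm_succ (ha : a ≠ 0) (hb : b ≠ 0) (hab : ‖a * b‖ < 1) (m n : ℕ) (j : ℤ) :
    finiteTripleTerm a b (m + 1) n j =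
      finiteTripleTerm a b m n j + a * (a * b) ^ m * finiteTripleTerm a b m n (j - 1) := by
  have ht : a * b ≠ 0 := mul_ne_zero ha hb
  have hpascal := invQFactorial_mul_pascal hab ht (m + 1 - j) (n + j)
  have hexp : (a * b) ^ (m + 1 - j + (n + j) : ℤ) = a * b * (a * b) ^ (m + n) := by
    rw [← pow_succ', ← zpow_natCast]
    congr 1
    push_cast
    ring
  have hterm : (a * b) ^ (m + 1 - j : ℤ) * thetaTerm a b j =
      a * (a * b) ^ m * thetaTerm a b (j - 1) := by
    have hsucc := thetaTerm_succ ha hb (j - 1)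
    have hsplit : (a * b) ^ (m + 1 - j : ℤ) * (a * b) ^ (j - 1) = (a * b) ^ m := by
      rw [← zpow_add₀ ht, ← zpow_natCast]
      congr 1
      ring
    rw [sub_add_cancel] at hsucc
    rw [hsucc, ← hsplit]
    ring
  rw [hexp, show (m + 1 - j - 1 : ℤ) = m - j by ring] at hpascal
  simp only [finiteTripleTerm, Nat.cast_succ, add_right_comm m 1 n, qPoch_succ, ← add_sub_assoc,
    sub_sub_eq_add_sub]
  linear_combination qPoch (a * b) (a * b) (m + n) * thetaTerm a b j * hpascal +
    qPoch (a * b) (a * b) (m + n) * (invQFactorial (a * b) (m + 1 - j) *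
      invQFactorial (a * b) (n + j - 1)) * hterm

lemma hasSum_finiteTripleTerm_zero_zero (a b : 𝕜) : HasSum (finiteTripleTerm a b 0 0) 1 := by
  convert hasSum_single (f := finiteTripleTerm a b 0 0) 0 fun j hj ↦ ?_
  · simp [finiteTripleTerm, thetaTerm, qPoch, invQFactorial]
  · rcases hj.lt_or_gt with hneg | hpos
    · simp [finiteTripleTerm, invQFactorial_of_neg _ hneg]
    · simp [finiteTripleTerm, invQFactorial_of_neg _ (neg_neg_of_pos hpos)]

lemma hasSum_finiteTripleTerm_of_zero_left (ha : a ≠ 0) (hb : b ≠ 0) (hab : ‖a * b‖ < 1) {n : ℕ}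
    {S : 𝕜} (h : HasSum (finiteTripleTerm a b 0 n) S) (m : ℕ) :
    HasSum (finiteTripleTerm a b m n) (qPoch (-a) (a * b) m * S) := by
  induction m with
  | zero => simpa only [qPoch, Finset.prod_range_zero, one_mul] using h
  | succ m ih =>
    have hshift := ((Equiv.subRight (1 : ℤ)).hasSum_iff.2 ih).mul_left (a * (a * b) ^ m)
    convert ih.add hshift using 1
    · exact funext fun j ↦ finiteTripleTerm_succ ha hb hab m n j
    · rw [qPoch_succ]
      ring

lemma hasSum_finiteTripleTerm (ha : a ≠ 0) (hb : b ≠ 0) (hab : ‖a * b‖ < 1) (m n : ℕ) :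
    HasSum (finiteTripleTerm a b m n) (qPoch (-a) (a * b) m * qPoch (-b) (a * b) n) := by
  have hba := hasSum_finiteTripleTerm_of_zero_left hb ha (by rwa [mul_comm])
    (hasSum_finiteTripleTerm_zero_zero b a) n
  rw [mul_one, mul_comm b, ← (Equiv.neg ℤ).hasSum_iff] at hba
  refine hasSum_finiteTripleTerm_of_zero_left ha hb hab ?_ m
  exact hba.congr_fun fun j ↦ (finiteTripleTerm_neg b a n 0 j).symm

variable [CompleteSpace 𝕜]

lemma tendsto_tsum_finiteTripleTerm (ha : a ≠ 0) (hb : b ≠ 0) (hab : ‖a * b‖ < 1) :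
    Tendsto (fun n : ℕ ↦ ∑' j, finiteTripleTerm a b n n j) atTop
      (𝓝 ((qPochInf (a * b) (a * b))⁻¹ * theta a b)) := by
  have hE := qPochInf_self_ne_zero hab
  have hD : Tendsto (fun n : ℕ ↦ qPoch (a * b) (a * b) (n + n)) atTop
      (𝓝 (qPochInf (a * b) (a * b))) :=
    (tendsto_qPoch _ hab).comp (tendsto_atTop_mono (fun n ↦ n.le_add_left n) tendsto_id)
  obtain ⟨C, hC⟩ := exists_norm_invQFactorial_le hab
  obtain ⟨D, hD'⟩ := (Metric.isBounded_range_of_tendsto _ hD).exists_norm_le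
  have hcast : Tendsto (fun n : ℕ ↦ (n : ℤ)) atTop atTop := tendsto_natCast_atTop_atTop
  rw [theta, ← tsum_mul_left]
  refine tendsto_tsum_of_dominated_convergence
    (bound := fun j ↦ D * (C * C) * ‖thetaTerm a b j‖)
    ((summable_norm_thetaTerm ha hb hab).mul_left _) (fun j ↦ ?_) (.of_forall fun n j ↦ ?_)
  · have hlim (u : ℕ → ℤ) (hu : Tendsto u atTop atTop) := (tendsto_invQFactorial hab).comp hu
    have hterm := (hD.mul ((hlim _ (tendsto_atTop_add_const_right _ (-j) hcast)).mul
      (hlim _ (tendsto_atTop_add_const_right _ j hcast)))).mul_const (thetaTerm a b j)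
    simpa only [mul_inv_cancel_left₀ hE, ← sub_eq_add_neg, finiteTripleTerm, Function.comp_apply]
      using hterm
  · have hC0 : 0 ≤ C := (norm_nonneg _).trans (hC 0)
    rw [finiteTripleTerm, norm_mul, norm_mul, norm_mul]
    gcongr
    exacts [(norm_nonneg _).trans (hD' _ ⟨0, rfl⟩), hD' _ ⟨n, rfl⟩, hC _, hC _]

theorem theta_eq_qPochInf (ha : a ≠ 0) (hb : b ≠ 0) (hab : ‖a * b‖ < 1) :
    theta a b = qPochInf (-a) (a * b) * qPochInf (-b) (a * b) * qPochInf (a * b) (a * b) := by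
  have hprod := ((tendsto_qPoch (-a) hab).mul (tendsto_qPoch (-b) hab)).congr
    fun n ↦ (hasSum_finiteTripleTerm ha hb hab n n).tsum_eq.symm
  rw [tendsto_nhds_unique hprod (tendsto_tsum_finiteTripleTerm ha hb hab), mul_comm,
    mul_inv_cancel_left₀ (qPochInf_self_ne_zero hab)]

end TripleProduct

section QuarterTurn

variable {E : Type*} [NormedAddCommGroup E]

/-- The sum of `F` over the points `(x, y)` with `x + 2 y ≡ r (mod 5)`. With `(x, y)` read as
`x + y i`, they form a coset of the ideal `(2 - i)` of `ℤ[i]`, whose generator has norm `5`. -/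
noncomputable def cosetSum (F : ℤ × ℤ → E) (r : ℤ) : E :=
  ∑' w : ℤ × ℤ, F (2 * w.1 + w.2 + r, 2 * w.2 - w.1)

lemma cosetSum_add_five (F : ℤ × ℤ → E) (r : ℤ) : cosetSum F (r + 5) = cosetSum F r := by
  rw [cosetSum, cosetSum, ← (Equiv.addRight ((-2, -1) : ℤ × ℤ)).tsum_eq]
  refine tsum_congr fun w ↦ congrArg F (Prod.ext ?_ ?_) <;> simp <;> ring

lemma cosetSum_two_mul_sub {F : ℤ × ℤ → E} {s : ℤ} (hF : ∀ x y, F (-y - s, x) = F (x, y))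
    (r : ℤ) : cosetSum F (2 * r - s) = cosetSum F r := by
  let e : ℤ × ℤ ≃ ℤ × ℤ :=
    (Equiv.prodComm ℤ ℤ).trans ((Equiv.subLeft (-r)).prodCongr (Equiv.refl ℤ))
  rw [cosetSum, cosetSum, ← e.tsum_eq]
  refine tsum_congr fun w ↦ (congrArg F (Prod.ext ?_ ?_)).trans (hF _ _) <;> simp [e] <;> ring

lemma bijective_coset_decomposition (s : ℤ) :
    Function.Bijective fun p : Fin 5 × ℤ × ℤ ↦
      (2 * p.2.1 + p.2.2 + (s + p.1), 2 * p.2.2 - p.2.1) := by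
  constructor
  · rintro ⟨r, m, n⟩ ⟨r', m', n'⟩ h
    simp only [Prod.mk.injEq] at h ⊢
    omega
  · rintro ⟨x, y⟩
    let r : Fin 5 := ⟨((x + 2 * y - s) % 5).toNat, by omega⟩
    refine ⟨(r, (2 * (x - s - r) - y) / 5, (x - s - r + 2 * y) / 5), ?_⟩
    simp only [r, Prod.mk.injEq]
    omega

variable [CompleteSpace E]

lemma tsum_eq_sum_cosetSum {F : ℤ × ℤ → E} (hF : Summable F) (s : ℤ) :
    ∑' z, F z = ∑ r : Fin 5, cosetSum F (s + r) := by
  let e := Equiv.ofBijective _ (bijective_coset_decomposition s)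
  have hFe : Summable fun p ↦ F (e p) := e.summable_iff.2 hF
  rw [← e.tsum_eq, hFe.tsum_prod, tsum_fintype]
  rfl

/-- The quarter turn `(x, y) ↦ (-y - s, x)` doubles `r - s` in `ℤ / 5`, so it fixes one coset and
permutes the four others cyclically. -/
theorem tsum_eq_cosetSum_add {F : ℤ × ℤ → E} (hsum : Summable F) {s : ℤ}
    (hF : ∀ x y, F (-y - s, x) = F (x, y)) :
    ∑' z, F z = cosetSum F s + 4 • cosetSum F (s + 1) := by
  have hturn := cosetSum_two_mul_sub hF
  have h2 : cosetSum F (s + 2) = cosetSum F (s + 1) := by rw [← hturn (s + 1)]; ring_nf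
  have h4 : cosetSum F (s + 4) = cosetSum F (s + 2) := by rw [← hturn (s + 2)]; ring_nf
  have h3 : cosetSum F (s + 3) = cosetSum F (s + 4) := by
    rw [← hturn (s + 4), ← cosetSum_add_five]
    ring_nf
  rw [tsum_eq_sum_cosetSum hsum s, Fin.sum_univ_five]
  change cosetSum F (s + 0) + cosetSum F (s + 1) + cosetSum F (s + 2) + cosetSum F (s + 3) +
    cosetSum F (s + 4) = _
  rw [add_zero, h3, h4, h2]
  abel

end QuarterTurn

section ThetaIdentities

variable {𝕜 : Type*} [NormedField 𝕜] {p : 𝕜}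

lemma thetaTerm_pow_pow (hp : p ≠ 0) (k l : ℕ) (j : ℤ) :
    thetaTerm (p ^ k) (p ^ l) j = p ^ (k * (j * (j + 1) / 2) + l * (j * (j - 1) / 2)) := by
  rw [thetaTerm, zpow_add₀ hp, zpow_mul, zpow_mul, zpow_natCast, zpow_natCast]

variable [CompleteSpace 𝕜]

lemma hasSum_zpow_theta_mul_theta (hp : p ≠ 0) (hp1 : ‖p‖ < 1) {k l m n : ℕ} (hkl : k + l ≠ 0)
    (hmn : m + n ≠ 0) {e : ℤ × ℤ → ℤ}
    (he : ∀ x y, 2 * e (x, y) =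
      (k + l) * x ^ 2 + (k - l) * x + ((m + n) * y ^ 2 + (m - n) * y)) :
    HasSum (fun z ↦ p ^ e z) (theta (p ^ k) (p ^ l) * theta (p ^ m) (p ^ n)) := by
  have hsum {i j : ℕ} (hij : i + j ≠ 0) : Summable fun x ↦ ‖thetaTerm (p ^ i) (p ^ j) x‖ :=
    summable_norm_thetaTerm (pow_ne_zero _ hp) (pow_ne_zero _ hp)
      (pow_add p i j ▸ norm_pow_lt_one hp1 hij)
  have hterm (z : ℤ × ℤ) :
      p ^ e z = thetaTerm (p ^ k) (p ^ l) z.1 * thetaTerm (p ^ m) (p ^ n) z.2 := by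
    rw [thetaTerm_pow_pow hp, thetaTerm_pow_pow hp, ← zpow_add₀ hp]
    congr 1
    refine mul_left_cancel₀ two_ne_zero ?_
    linear_combination he z.1 z.2 - k * two_mul_triangle z.1 - l * two_mul_triangle_pred z.1 -
      m * two_mul_triangle z.2 - n * two_mul_triangle_pred z.2
  simp only [hterm]
  rw [theta, theta, tsum_mul_tsum_of_summable_norm (hsum hkl) (hsum hmn)]
  exact (summable_mul_of_summable_norm (hsum hkl) (hsum hmn)).hasSum

lemma cosetSum_zpow_eq (hp : p ≠ 0) (hp1 : ‖p‖ < 1) {k l m n : ℕ} (hkl : k + l ≠ 0)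
    (hmn : m + n ≠ 0) {e : ℤ × ℤ → ℤ} {r : ℤ} (c : ℕ)
    (he : ∀ x y, 2 * e (2 * x + y + r, 2 * y - x) =
      2 * c + ((k + l) * x ^ 2 + (k - l) * x + ((m + n) * y ^ 2 + (m - n) * y))) :
    cosetSum (fun z ↦ p ^ e z) r = p ^ c * (theta (p ^ k) (p ^ l) * theta (p ^ m) (p ^ n)) := by
  have hsum := hasSum_zpow_theta_mul_theta hp hp1 hkl hmn
    (e := fun w ↦ e (2 * w.1 + w.2 + r, 2 * w.2 - w.1) - c) fun x y ↦ by linarith [he x y]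
  rw [← hsum.tsum_eq, ← tsum_mul_left, cosetSum]
  exact tsum_congr fun w ↦ by rw [← zpow_natCast, ← zpow_add₀ hp, add_sub_cancel]

/-- `φ(p)² = φ(p⁵)² + 4 p f(p⁹, p) f(p⁷, p³)`, since `φ(p) = f(p, p)`. -/
theorem theta_self_sq (hp : p ≠ 0) (hp1 : ‖p‖ < 1) :
    theta p p ^ 2 =
      theta (p ^ 5) (p ^ 5) ^ 2 + 4 * (p * (theta (p ^ 9) p * theta (p ^ 7) (p ^ 3))) := by
  let e (z : ℤ × ℤ) : ℤ := z.1 ^ 2 + z.2 ^ 2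
  have hφ : HasSum (fun z ↦ p ^ e z) (theta (p ^ 1) (p ^ 1) * theta (p ^ 1) (p ^ 1)) :=
    hasSum_zpow_theta_mul_theta hp hp1 (by decide) (by decide) fun x y ↦ by push_cast; ring
  have hturn := tsum_eq_cosetSum_add hφ.summable (s := 0) fun x y ↦ by
    simp only [e]
    ring_nf
  have hfixed : cosetSum (fun z ↦ p ^ e z) 0 =
      p ^ 0 * (theta (p ^ 5) (p ^ 5) * theta (p ^ 5) (p ^ 5)) :=
    cosetSum_zpow_eq hp hp1 (by decide) (by decide) 0 fun x y ↦ by push_cast; ring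
  have hmoved : cosetSum (fun z ↦ p ^ e z) (0 + 1) =
      p ^ 1 * (theta (p ^ 9) (p ^ 1) * theta (p ^ 7) (p ^ 3)) :=
    cosetSum_zpow_eq hp hp1 (by decide) (by decide) 1 fun x y ↦ by push_cast; ring
  rw [hφ.tsum_eq, hfixed, hmoved] at hturn
  simpa only [pow_zero, pow_one, one_mul, nsmul_eq_mul, Nat.cast_ofNat, sq] using hturn

/-- `ψ(p)² = p ψ(p⁵)² + f(p², p³) f(p, p⁴)`, since `2 ψ(p) = f(1, p)`. -/
theorem theta_one_self_sq (hp : p ≠ 0) (hp1 : ‖p‖ < 1) :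
    theta 1 p ^ 2 =
      p * theta 1 (p ^ 5) ^ 2 + 4 * (theta (p ^ 2) (p ^ 3) * theta p (p ^ 4)) := by
  let e (z : ℤ × ℤ) : ℤ := z.1 * (z.1 - 1) / 2 + z.2 * (z.2 - 1) / 2
  have he (x y : ℤ) : 2 * e (x, y) = x * (x - 1) + y * (y - 1) := by
    simp only [e, mul_add, two_mul_triangle_pred]
  have hψ : HasSum (fun z ↦ p ^ e z) (theta (p ^ 0) (p ^ 1) * theta (p ^ 0) (p ^ 1)) :=
    hasSum_zpow_theta_mul_theta hp hp1 (by decide) (by decide) fun x y ↦ by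
      rw [he]; push_cast; ring
  have hturn := tsum_eq_cosetSum_add hψ.summable (s := -1) fun x y ↦ by
    rw [show e (-y - -1, x) = e (x, y) by linarith [he (-y - -1) x, he x y]]
  have hfixed : cosetSum (fun z ↦ p ^ e z) (-1) =
      p ^ 1 * (theta (p ^ 0) (p ^ 5) * theta (p ^ 0) (p ^ 5)) :=
    cosetSum_zpow_eq hp hp1 (by decide) (by decide) 1 fun x y ↦ by rw [he]; push_cast; ring
  have hmoved : cosetSum (fun z ↦ p ^ e z) (-1 + 1) =
      p ^ 0 * (theta (p ^ 2) (p ^ 3) * theta (p ^ 1) (p ^ 4)) :=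
    cosetSum_zpow_eq hp hp1 (by decide) (by decide) 0 fun x y ↦ by rw [he]; push_cast; ring
  rw [hψ.tsum_eq, hfixed, hmoved] at hturn
  simpa only [pow_zero, pow_one, one_mul, nsmul_eq_mul, Nat.cast_ofNat, sq] using hturn

end ThetaIdentities

section EulerFunction

variable {𝕜 : Type*} [NormedField 𝕜]

/-- Euler's product `(q; q)_∞`, Ramanujan's `f(-q)`, here defined over any normed field. -/
noncomputable def eulerFun (q : 𝕜) : 𝕜 := qPochInf q q

variable [CompleteSpace 𝕜] {q : 𝕜}

lemma eulerFun_pow_ne_zero (hq : ‖q‖ < 1) {n : ℕ} (hn : n ≠ 0) : eulerFun (q ^ n) ≠ 0 :=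
  qPochInf_self_ne_zero (norm_pow_lt_one hq hn)

lemma eulerFun_ne_zero (hq : ‖q‖ < 1) : eulerFun q ≠ 0 := qPochInf_self_ne_zero hq

lemma qPochInf_neg_self (hq : ‖q‖ < 1) : qPochInf (-q) q = eulerFun (q ^ 2) / eulerFun q :=
  eq_div_of_mul_eq (eulerFun_ne_zero hq) (qPochInf_neg_mul_qPochInf q hq)

lemma qPochInf_self_sq (hq : ‖q‖ < 1) : qPochInf q (q ^ 2) = eulerFun q / eulerFun (q ^ 2) := by
  have hdissect := qPochInf_dissection q hq 2
  rw [Fin.prod_univ_two, Fin.val_zero, Fin.val_one, pow_zero, mul_one, pow_one, ← sq] at hdissect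
  exact eq_div_of_mul_eq (eulerFun_pow_ne_zero hq two_ne_zero) hdissect.symm

lemma theta_one_self (hq0 : q ≠ 0) (hq : ‖q‖ < 1) :
    theta 1 q = 2 * eulerFun (q ^ 2) ^ 2 / eulerFun q := by
  have hE := eulerFun_ne_zero hq
  rw [theta_eq_qPochInf one_ne_zero hq0 (by rwa [one_mul]), one_mul,
    qPochInf_eq_one_sub_mul (-1) hq, neg_one_mul, qPochInf_neg_self hq, ← eulerFun]
  field_simp
  ring

lemma theta_neg_self (hq0 : q ≠ 0) (hq : ‖q‖ < 1) :
    theta (-q) (-q) = eulerFun q ^ 2 / eulerFun (q ^ 2) := by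
  have hE := eulerFun_pow_ne_zero hq two_ne_zero
  have hsq : -q * -q = q ^ 2 := by ring
  rw [theta_eq_qPochInf (neg_ne_zero.2 hq0) (neg_ne_zero.2 hq0)
    (hsq ▸ norm_pow_lt_one hq two_ne_zero), hsq, neg_neg, qPochInf_self_sq hq,
    ← eulerFun]
  field_simp

lemma theta_mul_theta_mod_five (hq0 : q ≠ 0) (hq : ‖q‖ < 1) :
    theta (q ^ 2) (q ^ 3) * theta q (q ^ 4) =
      eulerFun (q ^ 2) * eulerFun (q ^ 5) ^ 3 / (eulerFun q * eulerFun (q ^ 10)) := by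
  have hE1 := eulerFun_ne_zero hq
  have hE5 := eulerFun_pow_ne_zero hq (n := 5) (by decide)
  have hE10 := eulerFun_pow_ne_zero hq (n := 10) (by decide)
  have hq5 := norm_pow_lt_one hq (m := 5) (by decide)
  have h14 : q * q ^ 4 = q ^ 5 := by ring
  have h23 : q ^ 2 * q ^ 3 = q ^ 5 := by ring
  have hdissect := qPochInf_dissection (-q) hq 5
  have hneg5 := qPochInf_neg_self hq5
  rw [← pow_mul] at hneg5
  simp only [Fin.prod_univ_five, qPochInf_neg_self hq, Fin.coe_ofNat_eq_mod, Nat.reduceMod,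
    neg_mul, ← pow_succ', Nat.reduceAdd, hneg5] at hdissect
  rw [theta_eq_qPochInf (pow_ne_zero 2 hq0) (pow_ne_zero 3 hq0) (by rwa [h23]),
    theta_eq_qPochInf hq0 (pow_ne_zero 4 hq0) (by rwa [h14]), h23, h14, ← eulerFun]
  field_simp at hdissect ⊢
  linear_combination -hdissect

lemma theta_mul_theta_mod_ten (hq0 : q ≠ 0) (hq : ‖q‖ < 1) :
    theta (-q ^ 9) (-q) * theta (-q ^ 7) (-q ^ 3) =
      eulerFun q * eulerFun (q ^ 10) ^ 3 / (eulerFun (q ^ 2) * eulerFun (q ^ 5)) := by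
  have hE2 := eulerFun_pow_ne_zero hq two_ne_zero
  have hE5 := eulerFun_pow_ne_zero hq (n := 5) (by decide)
  have hE10 := eulerFun_pow_ne_zero hq (n := 10) (by decide)
  have hq10 := norm_pow_lt_one hq (m := 10) (by decide)
  have hne (n : ℕ) : -q ^ n ≠ 0 := neg_ne_zero.2 (pow_ne_zero n hq0)
  have h91 : -q ^ 9 * -q = q ^ 10 := by ring
  have h73 : -q ^ 7 * -q ^ 3 = q ^ 10 := by ring
  have hdissect := qPochInf_dissection q (norm_pow_lt_one hq two_ne_zero) 5
  have hodd5 := qPochInf_self_sq (norm_pow_lt_one hq (m := 5) (by decide))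
  rw [← pow_mul] at hodd5
  simp only [Fin.prod_univ_five, qPochInf_self_sq hq, Fin.coe_ofNat_eq_mod, Nat.reduceMod,
    ← pow_mul, Nat.reduceMul, mul_one, ← pow_succ', Nat.reduceAdd, hodd5] at hdissect
  rw [theta_eq_qPochInf (hne 9) (neg_ne_zero.2 hq0) (by rwa [h91]),
    theta_eq_qPochInf (hne 7) (hne 3) (by rwa [h73]), h91, h73, ← eulerFun]
  simp only [neg_neg]
  field_simp at hdissect ⊢
  linear_combination -hdissect

end EulerFunction

section LevelTen

variable {𝕜 : Type*} [NormedField 𝕜] {q : 𝕜}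

/-- The Hauptmodul `η(2τ) η(5τ)⁵ / (η(τ) η(10τ)⁵)` of `Γ₀(10)`, as a function of
`q = exp (2πiτ)`. -/
noncomputable def hauptmodulTen (q : 𝕜) : 𝕜 :=
  eulerFun (q ^ 2) * eulerFun (q ^ 5) ^ 5 / (q * eulerFun q * eulerFun (q ^ 10) ^ 5)

/-- The Hauptmodul `(η(τ) / η(5τ))⁶` of `Γ₀(5)`, as a function of `q = exp (2πiτ)`. -/
noncomputable def hauptmodulFive (q : 𝕜) : 𝕜 := eulerFun q ^ 6 / (q * eulerFun (q ^ 5) ^ 6)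

variable [CompleteSpace 𝕜]

lemma hauptmodulTen_add_one [NeZero (2 : 𝕜)] (hq0 : q ≠ 0) (hq : ‖q‖ < 1) :
    hauptmodulTen q + 1 =
      eulerFun (q ^ 2) ^ 4 * eulerFun (q ^ 5) ^ 2 /
        (q * eulerFun q ^ 2 * eulerFun (q ^ 10) ^ 4) := by
  have hE1 := eulerFun_ne_zero hq
  have hE5 := eulerFun_pow_ne_zero hq (n := 5) (by decide)
  have hE10 := eulerFun_pow_ne_zero hq (n := 10) (by decide)
  have h4 : (4 : 𝕜) ≠ 0 := by
    rw [show (4 : 𝕜) = 2 ^ 2 by norm_num]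
    exact pow_ne_zero 2 two_ne_zero
  have hψ := theta_one_self_sq hq0 hq
  rw [theta_one_self hq0 hq, theta_one_self (pow_ne_zero 5 hq0) (norm_pow_lt_one hq (by decide)),
    theta_mul_theta_mod_five hq0 hq, ← pow_mul] at hψ
  rw [hauptmodulTen]
  field_simp at hψ ⊢
  refine mul_left_cancel₀ h4 ?_
  linear_combination -hψ

lemma hauptmodulTen_sub_four (hq0 : q ≠ 0) (hq : ‖q‖ < 1) :
    hauptmodulTen q - 4 =
      eulerFun q ^ 3 * eulerFun (q ^ 5) / (q * eulerFun (q ^ 2) * eulerFun (q ^ 10) ^ 3) := by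
  have hE1 := eulerFun_ne_zero hq
  have hE2 := eulerFun_pow_ne_zero hq two_ne_zero
  have hE5 := eulerFun_pow_ne_zero hq (n := 5) (by decide)
  have hE10 := eulerFun_pow_ne_zero hq (n := 10) (by decide)
  have hφ := theta_self_sq (neg_ne_zero.2 hq0) (by rwa [norm_neg])
  simp only [Odd.neg_pow (by decide : Odd 5), Odd.neg_pow (by decide : Odd 9),
    Odd.neg_pow (by decide : Odd 7), Odd.neg_pow (by decide : Odd 3)] at hφ
  rw [theta_neg_self hq0 hq, theta_neg_self (pow_ne_zero 5 hq0) (norm_pow_lt_one hq (by decide)),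
    theta_mul_theta_mod_ten hq0 hq, ← pow_mul] at hφ
  rw [hauptmodulTen]
  field_simp at hφ ⊢
  linear_combination -hφ

variable [NeZero (2 : 𝕜)]

lemma hauptmodulFive_eq (hq0 : q ≠ 0) (hq : ‖q‖ < 1) :
    hauptmodulFive q =
      (hauptmodulTen q + 1) * (hauptmodulTen q - 4) ^ 2 / hauptmodulTen q ^ 2 := by
  have hE1 := eulerFun_ne_zero hq
  have hE2 := eulerFun_pow_ne_zero hq two_ne_zero
  have hE5 := eulerFun_pow_ne_zero hq (n := 5) (by decide)
  have hE10 := eulerFun_pow_ne_zero hq (n := 10) (by decide)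
  rw [hauptmodulTen_add_one hq0 hq, hauptmodulTen_sub_four hq0 hq, hauptmodulFive, hauptmodulTen]
  field_simp

lemma hauptmodulFive_sq_eq (hq0 : q ≠ 0) (hq : ‖q‖ < 1) :
    hauptmodulFive (q ^ 2) =
      (hauptmodulTen q + 1) ^ 2 * (hauptmodulTen q - 4) / hauptmodulTen q := by
  have hE1 := eulerFun_ne_zero hq
  have hE2 := eulerFun_pow_ne_zero hq two_ne_zero
  have hE5 := eulerFun_pow_ne_zero hq (n := 5) (by decide)
  have hE10 := eulerFun_pow_ne_zero hq (n := 10) (by decide)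
  rw [hauptmodulTen_add_one hq0 hq, hauptmodulTen_sub_four hq0 hq, hauptmodulFive, hauptmodulTen,
    ← pow_mul]
  field_simp

lemma eulerFun_quotient_sq_eq (hq0 : q ≠ 0) (hq : ‖q‖ < 1) :
    (eulerFun q * eulerFun (q ^ 2)) ^ 2 / (q * (eulerFun (q ^ 5) * eulerFun (q ^ 10)) ^ 2) =
      (hauptmodulTen q + 1) * (hauptmodulTen q - 4) / hauptmodulTen q := by
  have hE1 := eulerFun_ne_zero hq
  have hE2 := eulerFun_pow_ne_zero hq two_ne_zero
  have hE5 := eulerFun_pow_ne_zero hq (n := 5) (by decide)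
  have hE10 := eulerFun_pow_ne_zero hq (n := 10) (by decide)
  rw [hauptmodulTen_add_one hq0 hq, hauptmodulTen_sub_four hq0 hq, hauptmodulTen]
  field_simp

end LevelTen

section Algebra

variable {K : Type*} [Field K] {a b h k r : K}

lemma add_eq_of_hauptmodul_relation (hh : h ≠ 0) (hk : k ≠ 0)
    (hrel : h ^ 2 * k = k ^ 2 + 2 * h * k + 4 * h) :
    (h + 1) * (h - 4) / h + (k + 1) * (k - 4) / k = (k / h - 1) * (k / h + 4) := by
  field_simp
  linear_combination (h + k) * hrel

lemma mul_eq_of_hauptmodul_relation (hh : h ≠ 0) (hk : k ≠ 0)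
    (hrel : h ^ 2 * k = k ^ 2 + 2 * h * k + 4 * h) :
    k / h * ((h + 1) * (h - 4) / h * ((k + 1) * (k - 4) / k)) =
      (k / h - 1) ^ 3 * (k / h + 4) := by
  field_simp
  linear_combination (k ^ 2 - h * (k + 4) + h ^ 2 * (k - 3)) * hrel

lemma modular_equation_of_parametrization (ha : a ≠ 0) (hb : b ≠ 0) (hr : r ≠ 0)
    (hadd : a ^ 2 + b ^ 2 = (r - 1) * (r + 4))
    (hmul : r * (a ^ 2 * b ^ 2) = (r - 1) ^ 3 * (r + 4)) :
    ((a / b) ^ 4 + 1 / (a / b) ^ 4) - 3 * ((a / b) ^ 2 + 1 / (a / b) ^ 2)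
      - (a * b + 5 ^ 2 / (a * b)) * (a / b + 1 / (a / b)) - 12 = 0 := by
  have hne : (r - 1) ^ 3 * (r + 4) ≠ 0 :=
    hmul ▸ mul_ne_zero hr (mul_ne_zero (pow_ne_zero 2 ha) (pow_ne_zero 2 hb))
  have hr1 : r - 1 ≠ 0 := ne_zero_pow three_ne_zero (left_ne_zero_of_mul hne)
  have hr4 : r + 4 ≠ 0 := right_ne_zero_of_mul hne
  set T := a / b + 1 / (a / b) with hT
  have hPT : a * b * T = (r - 1) * (r + 4) := by
    rw [hT, ← hadd]
    field_simp
  have hTP : T / (a * b) = r / (r - 1) ^ 2 := by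
    have hT_div : T / (a * b) = (a ^ 2 + b ^ 2) / (a ^ 2 * b ^ 2) := by
      rw [hT]
      field_simp
    rw [hT_div, hadd, div_eq_div_iff (by positivity) (pow_ne_zero 2 hr1)]
    linear_combination -hmul
  have hTT : T ^ 2 = r * (r + 4) / (r - 1) := by
    calc T ^ 2 = T / (a * b) * (a * b * T) := by field_simp
      _ = r * (r + 4) / (r - 1) := by rw [hTP, hPT]; field_simp
  calc _ = (T ^ 2) ^ 2 - 7 * T ^ 2 - 4 - a * b * T - 25 * (T / (a * b)) := by
        rw [hT]
        field_simp
        ring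
    _ = 0 := by
      rw [hTT, hPT, hTP]
      field_simp
      ring

end Algebra

section Real

variable {q : ℝ}

lemma eulerFun_pos (hq0 : 0 < q) (hq1 : q < 1) : 0 < eulerFun q := by
  have hq : ‖q‖ < 1 := by rwa [Real.norm_of_nonneg hq0.le]
  refine (eulerFun_ne_zero hq).symm.lt_of_le (ge_of_tendsto' (tendsto_qPoch q hq) fun n ↦
    Finset.prod_nonneg fun k _ ↦ ?_)
  rw [← pow_succ', sub_nonneg]
  exact pow_le_one₀ hq0.le hq1.le

lemma hauptmodulTen_pos (hq0 : 0 < q) (hq1 : q < 1) : 0 < hauptmodulTen q := by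
  have hE {n : ℕ} (hn : n ≠ 0) := eulerFun_pos (pow_pos hq0 n) (pow_lt_one₀ hq0.le hq1 hn)
  exact div_pos (mul_pos (hE two_ne_zero) (pow_pos (hE (by decide)) 5))
    (mul_pos (mul_pos hq0 (eulerFun_pos hq0 hq1)) (pow_pos (hE (by decide)) 5))

/-- Equating the two expressions for `hauptmodulFive (q ^ 2)` gives this relation multiplied by
`h(q) h(q²) + 4`, which does not vanish because `h` is positive on `(0, 1)`. -/
lemma hauptmodulTen_relation (hq0 : 0 < q) (hq1 : q < 1) :
    hauptmodulTen q ^ 2 * hauptmodulTen (q ^ 2) =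
      hauptmodulTen (q ^ 2) ^ 2 + 2 * hauptmodulTen q * hauptmodulTen (q ^ 2) +
        4 * hauptmodulTen q := by
  have hq : ‖q‖ < 1 := by rwa [Real.norm_of_nonneg hq0.le]
  have hh := hauptmodulTen_pos hq0 hq1
  have hk := hauptmodulTen_pos (pow_pos hq0 2) (pow_lt_one₀ hq0.le hq1 two_ne_zero)
  have hfive := (hauptmodulFive_sq_eq hq0.ne' hq).symm.trans
    (hauptmodulFive_eq (pow_ne_zero 2 hq0.ne') (norm_pow_lt_one hq two_ne_zero))
  rw [div_eq_div_iff hh.ne' (pow_ne_zero 2 hk.ne')] at hfive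
  have hpos : 0 < hauptmodulTen q * hauptmodulTen (q ^ 2) + 4 := by positivity
  refine mul_left_cancel₀ hpos.ne' ?_
  linear_combination hfive

lemma fneg_eq_theta (hq0 : q ≠ 0) : fneg q = theta (-q) (-q ^ 2) := by
  refine tsum_congr fun n ↦ ?_
  have hexp : n * (3 * n - 1) / 2 = n * (n + 1) / 2 + 2 * (n * (n - 1) / 2) := by
    have h1 := two_mul_triangle n
    have h2 := two_mul_triangle_pred n
    refine Int.ediv_eq_of_eq_mul_right two_ne_zero ?_
    linarith
  have hsign : (-1 : ℝ) ^ n = (-1) ^ (n * (n + 1) / 2) * (-1) ^ (n * (n - 1) / 2) := by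
    have hsq : n * (n + 1) / 2 + n * (n - 1) / 2 = n * n := by
      linarith [two_mul_triangle n, two_mul_triangle_pred n]
    rw [← zpow_add₀ (by norm_num), hsq, zpow_mul]
    rcases Int.even_or_odd n with hn | hn
    · rw [hn.neg_one_zpow, one_zpow]
    · rw [hn.neg_one_zpow, hn.neg_one_zpow]
  rw [hsign, hexp, thetaTerm, neg_eq_neg_one_mul q, neg_eq_neg_one_mul (q ^ 2), mul_zpow, mul_zpow,
    zpow_add₀ hq0, zpow_mul, zpow_ofNat]
  ring

lemma fneg_eq_eulerFun (hq0 : q ≠ 0) (hq : ‖q‖ < 1) : fneg q = eulerFun q := by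
  have hcube : -q * -q ^ 2 = q ^ 3 := by ring
  have hdissect := qPochInf_dissection q hq 3
  simp only [Fin.prod_univ_three, Fin.coe_ofNat_eq_mod, Nat.reduceMod, ← pow_succ', Nat.reduceAdd,
    zero_add, pow_one] at hdissect
  rw [fneg_eq_theta hq0, theta_eq_qPochInf (neg_ne_zero.2 hq0)
    (neg_ne_zero.2 (pow_ne_zero 2 hq0)) (hcube ▸ norm_pow_lt_one hq three_ne_zero), hcube, neg_neg,
    neg_neg, eulerFun, hdissect]

/-- The quotient `A = B₁` of the modular equation, equal to
`η(τ) η(2τ) / (η(5τ) η(10τ))` at `q = exp (2πiτ)`; the general `Bₙ` is its value at `q ^ n`. -/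
noncomputable def fnegQuotient (q : ℝ) : ℝ :=
  fneg q * fneg (q ^ 2) / (q ^ ((1 : ℝ) / 2) * fneg (q ^ 5) * fneg (q ^ 10))

lemma fnegQuotient_sq_left (hq0 : 0 < q) :
    fnegQuotient (q ^ 2) =
      fneg (q ^ 2) * fneg (q ^ 4) / (q * fneg (q ^ 10) * fneg (q ^ 20)) := by
  simp only [fnegQuotient, ← pow_mul, Nat.reduceMul, ← Real.sqrt_eq_rpow, Real.sqrt_sq hq0.le]

lemma fnegQuotient_ne_zero (hq0 : 0 < q) (hq1 : q < 1) : fnegQuotient q ≠ 0 := by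
  have hF {n : ℕ} (hn : n ≠ 0) : fneg (q ^ n) ≠ 0 := by
    have hqn := pow_pos hq0 n
    have hqn1 := pow_lt_one₀ hq0.le hq1 hn
    rw [fneg_eq_eulerFun hqn.ne' (by rwa [Real.norm_of_nonneg hqn.le])]
    exact (eulerFun_pos hqn hqn1).ne'
  have hF1 : fneg q ≠ 0 := by simpa only [pow_one] using hF one_ne_zero
  exact div_ne_zero (mul_ne_zero hF1 (hF two_ne_zero))
    (mul_ne_zero (mul_ne_zero (Real.rpow_pos_of_pos hq0 _).ne' (hF (by decide))) (hF (by decide)))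

lemma fnegQuotient_sq (hq0 : 0 < q) (hq1 : q < 1) :
    fnegQuotient q ^ 2 =
      (hauptmodulTen q + 1) * (hauptmodulTen q - 4) / hauptmodulTen q := by
  have hq : ‖q‖ < 1 := by rwa [Real.norm_of_nonneg hq0.le]
  have hF {n : ℕ} (hn : n ≠ 0) : fneg (q ^ n) = eulerFun (q ^ n) :=
    fneg_eq_eulerFun (pow_ne_zero n hq0.ne') (norm_pow_lt_one hq hn)
  rw [← eulerFun_quotient_sq_eq hq0.ne' hq, fnegQuotient, fneg_eq_eulerFun hq0.ne' hq,
    hF two_ne_zero, hF (by decide), hF (by decide), div_pow, mul_assoc, mul_pow (q ^ _),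
    ← Real.sqrt_eq_rpow, Real.sq_sqrt hq0.le]

end Real

theorem stmt_5 (q A B₂ P Q : ℝ) (hq0 : 0 < q) (hq1 : q < 1)
    (hA : A = fneg q * fneg (q ^ 2) /
      (q ^ ((1 : ℝ) / 2) * fneg (q ^ 5) * fneg (q ^ 10)))
    (hB : B₂ = fneg (q ^ 2) * fneg (q ^ 4) /
      (q * fneg (q ^ 10) * fneg (q ^ 20)))
    (hP : P = A * B₂) (hQ : Q = A / B₂) :
    (Q ^ 4 + 1 / Q ^ 4) - 3 * (Q ^ 2 + 1 / Q ^ 2)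
      - (P + 5 ^ 2 / P) * (Q + 1 / Q) - 12 = 0 := by
  have hqq0 : 0 < q ^ 2 := pow_pos hq0 2
  have hqq1 : q ^ 2 < 1 := pow_lt_one₀ hq0.le hq1 two_ne_zero
  have hh := (hauptmodulTen_pos hq0 hq1).ne'
  have hk := (hauptmodulTen_pos hqq0 hqq1).ne'
  have hrel := hauptmodulTen_relation hq0 hq1
  rw [← fnegQuotient] at hA
  rw [← fnegQuotient_sq_left hq0] at hB
  rw [hP, hQ, hA, hB]
  refine modular_equation_of_parametrization (fnegQuotient_ne_zero hq0 hq1)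
    (fnegQuotient_ne_zero hqq0 hqq1) (div_ne_zero hk hh) ?_ ?_
  · rw [fnegQuotient_sq hq0 hq1, fnegQuotient_sq hqq0 hqq1,
      add_eq_of_hauptmodul_relation hh hk hrel]
  · rw [fnegQuotient_sq hq0 hq1, fnegQuotient_sq hqq0 hqq1,
      mul_eq_of_hauptmodul_relation hh hk hrel]
end
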